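/- arXiv:2305.09355 — 12 statements merged into one kernel-verified Lean document; each statement's English description precedes it below -/
import Mathlib

section
/- Let F be a field, let ℙ be the prime field of F, and let G and H be finite groups. If the group algebras FG and FH are isomorphic as F-algebras, then there exists a finite field extension F₀ of ℙ such that F₀G and F₀H are isomorphic as F₀-algebras. -/
namespace GroupAlgebraDescent

open MonoidAlgebra

/-- Extension of scalars commutes with the algebra map induced by a monoid morphism. -/
lemma mapRingHom_lift {R S G H : Type*} [CommRing R] [CommRing S] [Group G] [Group H]
    (f : R →+* S) (u : G →* MonoidAlgebra R H) (x : MonoidAlgebra R G) :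
    mapRingHom H f (lift R (MonoidAlgebra R H) G u x) =
      lift S (MonoidAlgebra S H) G ((mapRingHom H f : _ →* _).comp u) (mapRingHom G f x) := by
  have key : (mapRingHom H f).comp (lift R (MonoidAlgebra R H) G u : _ →+* _) =
      (lift S (MonoidAlgebra S H) G ((mapRingHom H f : _ →* _).comp u) : _ →+* _).comp
        (mapRingHom G f) := by
    apply MonoidAlgebra.ringHom_ext
    · intro r
      ext m
      have h1 : f ((1 : MonoidAlgebra R H).coeff m) = (1 : MonoidAlgebra S H).coeff m := by
        rw [← coeff_mapRingHom, map_one]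
      simp [lift_single, h1]
    · intro g
      simp [lift_single]
  exact DFunLike.congr_fun key x

lemma mapRingHom_injective {R S H : Type*} [CommRing R] [CommRing S] [Group H]
    (f : R →+* S) (hf : Function.Injective f) : Function.Injective (mapRingHom H f) := by
  intro x y hxy
  ext m
  apply hf
  rw [← coeff_mapRingHom, ← coeff_mapRingHom, hxy]

lemma exists_mapRingHom_eq {R S H : Type*} [CommRing R] [CommRing S] [Group H] [Finite H]
    (f : R →+* S) (y : MonoidAlgebra S H) (hy : ∀ m, y.coeff m ∈ f.range) :
    ∃ x : MonoidAlgebra R H, mapRingHom H f x = y := by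
  choose c hc using hy
  refine ⟨ofCoeff (Finsupp.equivFunOnFinite.symm c), ?_⟩
  ext m
  rw [coeff_mapRingHom]
  simpa using hc m

/-- A monoid morphism into `S[H]` with coefficients in `R` comes from `R[H]`. -/
lemma exists_monoidHom {R S G H : Type*} [CommRing R] [CommRing S] [Group G] [Group H] [Finite H]
    (f : R →+* S) (hf : Function.Injective f) (v : G →* MonoidAlgebra S H)
    (hv : ∀ g m, (v g).coeff m ∈ f.range) :
    ∃ u : G →* MonoidAlgebra R H, (mapRingHom H f : _ →* _).comp u = v := by
  choose u hu using fun g => exists_mapRingHom_eq f (v g) (hv g)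
  refine ⟨⟨⟨u, ?_⟩, ?_⟩, ?_⟩
  · apply mapRingHom_injective f hf
    rw [hu, map_one, map_one]
  · intro a b
    apply mapRingHom_injective f hf
    change mapRingHom H f (u (a * b)) = mapRingHom H f (u a * u b)
    rw [hu, map_mul, map_mul, hu, hu]
  · ext1 g
    exact hu g

lemma comp_eq {R F K G H : Type*} [CommRing R] [CommRing F] [CommRing K] [Group G] [Group H]
    (f : R →+* F) (hf : Function.Injective f) (k : R →+* K)
    (φ : MonoidAlgebra F G →ₐ[F] MonoidAlgebra F H) (ψ : MonoidAlgebra F H →ₐ[F] MonoidAlgebra F G)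
    (h : ∀ x, ψ (φ x) = x)
    (u : G →* MonoidAlgebra R H) (w : H →* MonoidAlgebra R G)
    (hu : (mapRingHom H f : _ →* _).comp u = (φ : MonoidAlgebra F G →* MonoidAlgebra F H).comp (of F G))
    (hw : (mapRingHom G f : _ →* _).comp w = (ψ : MonoidAlgebra F H →* MonoidAlgebra F G).comp (of F H)) :
    (lift K (MonoidAlgebra K G) H ((mapRingHom G k : _ →* _).comp w)).comp
      (lift K (MonoidAlgebra K H) G ((mapRingHom H k : _ →* _).comp u)) = AlgHom.id K _ := by
  have hψ : lift F (MonoidAlgebra F G) H ((ψ : MonoidAlgebra F H →* MonoidAlgebra F G).comp (of F H)) = ψ :=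
    (lift F (MonoidAlgebra F G) H).apply_symm_apply ψ
  have key : ∀ g, lift R (MonoidAlgebra R G) H w (u g) = of R G g := by
    intro g
    apply mapRingHom_injective f hf
    rw [mapRingHom_lift, hw, hψ]
    have := DFunLike.congr_fun hu g
    change mapRingHom H f (u g) = φ (of F G g) at this
    rw [this, h]
    simp
  apply MonoidAlgebra.algHom_ext
  on_goal 2 => exact Subsingleton.elim _ _
  intro g
  have h2 := congrArg (mapRingHom G k) (key g)
  rw [mapRingHom_lift] at h2
  simpa [lift_single] using h2

lemma descent {R F K G H : Type*} [CommRing R] [CommRing F] [CommRing K] [Group G] [Group H]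
    [Finite G] [Finite H]
    (f : R →+* F) (hf : Function.Injective f) (k : R →+* K)
    (e : MonoidAlgebra F G ≃ₐ[F] MonoidAlgebra F H)
    (h1 : ∀ g m, (e (of F G g)).coeff m ∈ f.range)
    (h2 : ∀ g m, (e.symm (of F H g)).coeff m ∈ f.range) :
    Nonempty (MonoidAlgebra K G ≃ₐ[K] MonoidAlgebra K H) := by
  obtain ⟨u, hu⟩ := exists_monoidHom f hf
    (((e : MonoidAlgebra F G →ₐ[F] MonoidAlgebra F H) :
      MonoidAlgebra F G →* MonoidAlgebra F H).comp (of F G)) h1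
  obtain ⟨w, hw⟩ := exists_monoidHom f hf
    (((e.symm : MonoidAlgebra F H →ₐ[F] MonoidAlgebra F G) :
      MonoidAlgebra F H →* MonoidAlgebra F G).comp (of F H)) h2
  exact ⟨AlgEquiv.ofAlgHom _ _
    (comp_eq f hf k (e.symm : MonoidAlgebra F H →ₐ[F] MonoidAlgebra F G)
      (e : MonoidAlgebra F G →ₐ[F] MonoidAlgebra F H) (fun x => e.apply_symm_apply x) w u hw hu)
    (comp_eq f hf k (e : MonoidAlgebra F G →ₐ[F] MonoidAlgebra F H)
      (e.symm : MonoidAlgebra F H →ₐ[F] MonoidAlgebra F G)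
      (fun x => e.symm_apply_apply x) u w hu hw)⟩

lemma countable_bot (F : Type*) [Field F] : Countable (⊥ : Subfield F) := by
  obtain ⟨p, hp⟩ := CharP.exists F
  rcases CharP.char_is_prime_or_zero F p with hprime | rfl
  · have : Fact p.Prime := ⟨hprime⟩
    let := ZMod.algebra F p
    rw [Subfield.bot_eq_of_zMod_algebra p]
    exact (Set.countable_range (algebraMap (ZMod p) F)).to_subtype
  · have := CharP.charP_to_charZero F
    rw [Subfield.bot_eq_of_charZero]
    exact (Set.countable_range (algebraMap ℚ F)).to_subtype

lemma countable_of_finite (k V : Type*) [Field k] [Countable k] [AddCommGroup V] [Module k V]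
    [Module.Finite k V] : Countable V :=
  (Module.finBasis k V).equivFun.toEquiv.countable_iff.mpr inferInstance

/-- The Zariski lemma, with the residue field moved to `Type`. -/
lemma exists_finite_residue (k A : Type*) [Field k] [Countable k] [CommRing A] [Nontrivial A]
    [Algebra k A] [Algebra.FiniteType k A] :
    ∃ (K : Type) (_ : Field K) (_ : Algebra k K), FiniteDimensional k K ∧ Nonempty (A →+* K) := by
  obtain ⟨m, hm⟩ := Ideal.exists_maximal A
  let _ : Field (A ⧸ m) := Ideal.Quotient.field m
  have : Algebra.FiniteType k (A ⧸ m) :=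
    .of_surjective (Ideal.Quotient.mkₐ k m) (Ideal.Quotient.mkₐ_surjective _ _)
  have hfin : Module.Finite k (A ⧸ m) := finite_of_finite_type_of_isJacobsonRing _ _
  have : Countable (A ⧸ m) := countable_of_finite k (A ⧸ m)
  have : Small.{0} (A ⧸ m) := Countable.toSmall _
  exact ⟨Shrink.{0} (A ⧸ m), inferInstance, inferInstance,
    Module.Finite.equiv (Shrink.algEquiv k (A ⧸ m)).symm.toLinearEquiv,
    ⟨(Shrink.ringEquiv (A ⧸ m)).symm.toRingHom.comp (Ideal.Quotient.mk m)⟩⟩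

end GroupAlgebraDescent

/-- **Main Theorem.** Let `F` be a field with prime field `ℙ` (the subfield `⊥ : Subfield F`),
and let `G` and `H` be finite groups. If the group algebras `FG` and `FH` are isomorphic as
`F`-algebras, then there is a finite field extension `F₀` of `ℙ` such that `F₀G ≅ F₀H` as
`F₀`-algebras. -/
theorem isomorphism_problem_reduces_to_finite_extensions_of_prime_field
    (F : Type*) [Field F] (G H : Type*) [Group G] [Group H] [Finite G] [Finite H]
    (h : Nonempty (MonoidAlgebra F G ≃ₐ[F] MonoidAlgebra F H)) :
    ∃ (F₀ : Type) (_ : Field F₀) (_ : Algebra (⊥ : Subfield F) F₀),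
      FiniteDimensional (⊥ : Subfield F) F₀ ∧
      Nonempty (MonoidAlgebra F₀ G ≃ₐ[F₀] MonoidAlgebra F₀ H) := by
  classical
  obtain ⟨e⟩ := h
  let s : Set F := Set.range (fun p : G × H => (e (MonoidAlgebra.of F G p.1)).coeff p.2) ∪
    Set.range (fun p : H × G => (e.symm (MonoidAlgebra.of F H p.1)).coeff p.2)
  have hs : s.Finite := (Set.finite_range _).union (Set.finite_range _)
  let A := Algebra.adjoin (⊥ : Subfield F) s
  have : Algebra.FiniteType (⊥ : Subfield F) A := .adjoin_of_finite hs
  have := GroupAlgebraDescent.countable_bot F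
  obtain ⟨K, i1, i2, hK, ⟨k⟩⟩ :=
    GroupAlgebraDescent.exists_finite_residue (⊥ : Subfield F) A
  refine ⟨K, i1, i2, hK, ?_⟩
  refine GroupAlgebraDescent.descent (A.val : A →+* F) Subtype.val_injective
    k e ?_ ?_
  · intro g x
    exact ⟨⟨_, Algebra.subset_adjoin (Or.inl ⟨(g, x), rfl⟩)⟩, rfl⟩
  · intro g x
    exact ⟨⟨_, Algebra.subset_adjoin (Or.inr ⟨(g, x), rfl⟩)⟩, rfl⟩
end

section
/- Let F be a field of characteristic 0 and let G and H be finite groups. If the group algebras FG and FH are isomorphic as F-algebras, then there exists a field F₀ of characteristic 0 that is finite-dimensional over ℚ (a number field) such that F₀G and F₀H are isomorphic as F₀-algebras. -/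
open MonoidAlgebra in
/-- A homomorphism of group algebras defined over a subring, compatible with one over a bigger
ring. -/
theorem gaiso_compat {A B G H : Type*} [CommRing A] [CommRing B] [Group G] [Group H]
    (f : A →+* B) (a : G →* MonoidAlgebra A H) (b : G →* MonoidAlgebra B H)
    (hab : ∀ g, mapRingHom H f (a g) = b g) (x : MonoidAlgebra A G) :
    mapRingHom H f (MonoidAlgebra.lift A (MonoidAlgebra A H) G a x) =
      MonoidAlgebra.lift B (MonoidAlgebra B H) G b (mapRingHom G f x) := by
  induction x using MonoidAlgebra.induction_linear with
  | zero => simp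
  | add x y hx hy => simp only [map_add, hx, hy]
  | single g r =>
    rw [MonoidAlgebra.lift_single, mapRingHom_single, MonoidAlgebra.lift_single, ← hab,
      Algebra.smul_def, Algebra.smul_def, map_mul]
    congr 1
    simp [MonoidAlgebra.coe_algebraMap]

open MonoidAlgebra in
theorem gaiso_inj {A B H : Type*} [CommRing A] [CommRing B] [Group H]
    (f : A →+* B) (hf : Function.Injective f) : Function.Injective (mapRingHom H f) := by
  intro x y hxy
  ext m
  apply hf
  have := congrArg (fun z => z.coeff m) hxy
  simpa using this

open MonoidAlgebra in
theorem gaiso_mulHom {A F G H : Type*} [CommRing A] [CommRing F] [Group G] [Group H]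
    (i : A →+* F) (hi : Function.Injective i)
    (e : MonoidAlgebra F G ≃ₐ[F] MonoidAlgebra F H)
    (a : G → MonoidAlgebra A H) (ha : ∀ g, mapRingHom H i (a g) = e (single g 1)) :
    ∃ a' : G →* MonoidAlgebra A H, ∀ g, mapRingHom H i (a' g) = e (single g 1) := by
  refine ⟨⟨⟨a, ?_⟩, ?_⟩, ha⟩
  · apply gaiso_inj i hi
    rw [ha, map_one, ← MonoidAlgebra.one_def, map_one]
  · intro g g'
    apply gaiso_inj i hi
    rw [map_mul, ha, ha, ha, ← map_mul]
    simp

open MonoidAlgebra in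
theorem gaiso_inverse {A F K G H : Type*} [CommRing A] [CommRing F] [CommRing K]
    [Group G] [Group H]
    (i : A →+* F) (hi : Function.Injective i) (p : A →+* K)
    (e : MonoidAlgebra F G ≃ₐ[F] MonoidAlgebra F H)
    (a : G →* MonoidAlgebra A H) (ha : ∀ g, mapRingHom H i (a g) = e (single g 1))
    (b : H →* MonoidAlgebra A G) (hb : ∀ g, mapRingHom G i (b g) = e.symm (single g 1)) :
    (MonoidAlgebra.lift K (MonoidAlgebra K G) H ((mapRingHom G p : _ →* _).comp b)).comp
      (MonoidAlgebra.lift K (MonoidAlgebra K H) G ((mapRingHom H p : _ →* _).comp a)) =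
      AlgHom.id K _ := by
  have key : ∀ g, MonoidAlgebra.lift A (MonoidAlgebra A G) H b (a g) = single g 1 := by
    intro g
    apply gaiso_inj i hi
    rw [gaiso_compat i b ((e.symm : MonoidAlgebra F H →* MonoidAlgebra F G).comp (of F H))
      (by intro h; rw [hb]; simp), ha]
    have : MonoidAlgebra.lift F (MonoidAlgebra F G) H
        ((e.symm : MonoidAlgebra F H →* MonoidAlgebra F G).comp (of F H)) = e.symm.toAlgHom := by
      ext <;> simp
    rw [this]
    simp
  apply MonoidAlgebra.algHom_ext
  · intro g
    have h2 := gaiso_compat p b ((mapRingHom G p : _ →* _).comp b) (fun _ => rfl) (a g)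
    rw [key] at h2
    simp only [AlgHom.comp_apply, MonoidAlgebra.lift_single, one_smul, MonoidHom.comp_apply]
    refine Eq.trans h2.symm ?_
    simp
  all_goals ext

open MonoidAlgebra in
theorem gaiso_transfer {A F K G H : Type*} [CommRing A] [CommRing F] [CommRing K]
    [Group G] [Group H]
    (i : A →+* F) (hi : Function.Injective i) (p : A →+* K)
    (e : MonoidAlgebra F G ≃ₐ[F] MonoidAlgebra F H)
    (a : G → MonoidAlgebra A H) (ha : ∀ g, mapRingHom H i (a g) = e (single g 1))
    (b : H → MonoidAlgebra A G) (hb : ∀ g, mapRingHom G i (b g) = e.symm (single g 1)) :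
    Nonempty (MonoidAlgebra K G ≃ₐ[K] MonoidAlgebra K H) := by
  obtain ⟨a', ha'⟩ := gaiso_mulHom i hi e a ha
  obtain ⟨b', hb'⟩ := gaiso_mulHom i hi e.symm b hb
  exact ⟨AlgEquiv.ofAlgHom _ _ (gaiso_inverse i hi p e.symm b' hb' a' (by simpa using ha'))
    (gaiso_inverse i hi p e a' ha' b' hb')⟩

open MonoidAlgebra in
theorem gaiso_descend {F H : Type*} [Field F] [CharZero F] [Group H] [Finite H]
    (A : Subalgebra ℚ F) (x : MonoidAlgebra F H) (hx : ∀ h, x.coeff h ∈ A) :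
    ∃ y : MonoidAlgebra A H, mapRingHom H (A.val : A →+* F) y = x := by
  have := Fintype.ofFinite H
  refine ⟨∑ h, single h ⟨x.coeff h, hx h⟩, ?_⟩
  rw [map_sum]
  simp only [mapRingHom_single]
  ext m
  classical
  simp [MonoidAlgebra.coeff_sum, MonoidAlgebra.coeff_single]

/-- A nonzero finitely generated commutative `ℚ`-algebra has a point in a number field. -/
theorem gaiso_point (A : Type*) [CommRing A] [Nontrivial A] [Algebra ℚ A]
    [Algebra.FiniteType ℚ A] :
    ∃ K : IntermediateField ℚ (AlgebraicClosure ℚ), FiniteDimensional ℚ K ∧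
      Nonempty (A →+* K) := by
  obtain ⟨m, hm⟩ := Ideal.exists_maximal A
  let _ : Field (A ⧸ m) := Ideal.Quotient.field m
  have hfin : Module.Finite ℚ (A ⧸ m) := finite_of_finite_type_of_isJacobsonRing ℚ (A ⧸ m)
  let φ : (A ⧸ m) →ₐ[ℚ] AlgebraicClosure ℚ := IsAlgClosed.lift
  have hfr : FiniteDimensional ℚ φ.fieldRange :=
    Module.Finite.of_surjective φ.rangeRestrict.toLinearMap φ.rangeRestrict_surjective
  exact ⟨φ.fieldRange, hfr,
    ⟨(show (A ⧸ m) →+* φ.fieldRange from φ.rangeRestrict.toRingHom).comp (Ideal.Quotient.mk m)⟩⟩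

/-- Let `F` be a field of characteristic `0` and let `G` and `H` be finite groups. If
`FG ≅ FH` as `F`-algebras, then there is a field `F₀` of characteristic `0` which is
finite-dimensional over `ℚ` (a number field) with `F₀G ≅ F₀H` as `F₀`-algebras. -/
theorem isomorphism_problem_char_zero_reduces_to_number_fields
    (F : Type*) [Field F] [CharZero F] (G H : Type*) [Group G] [Group H] [Finite G] [Finite H]
    (h : Nonempty (MonoidAlgebra F G ≃ₐ[F] MonoidAlgebra F H)) :
    ∃ (F₀ : Type) (_ : Field F₀) (_ : CharZero F₀),
      FiniteDimensional ℚ F₀ ∧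
      Nonempty (MonoidAlgebra F₀ G ≃ₐ[F₀] MonoidAlgebra F₀ H) := by
  obtain ⟨e⟩ := h
  let S : Set F := (Set.range fun q : G × H => (e (MonoidAlgebra.single q.1 1)).coeff q.2) ∪
    (Set.range fun q : H × G => (e.symm (MonoidAlgebra.single q.1 1)).coeff q.2)
  have hS : S.Finite := (Set.finite_range _).union (Set.finite_range _)
  let A : Subalgebra ℚ F := Algebra.adjoin ℚ S
  have hAfg : A.FG := ⟨hS.toFinset, by simp [A]⟩
  have : Algebra.FiniteType ℚ A := A.fg_iff_finiteType.mp hAfg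
  choose a ha using fun g : G => gaiso_descend A (e (MonoidAlgebra.single g 1))
    (fun h => Algebra.subset_adjoin (Or.inl ⟨(g, h), rfl⟩))
  choose b hb using fun g : H => gaiso_descend A (e.symm (MonoidAlgebra.single g 1))
    (fun h => Algebra.subset_adjoin (Or.inr ⟨(g, h), rfl⟩))
  obtain ⟨K, hK, ⟨p⟩⟩ := gaiso_point A
  exact ⟨K, inferInstance, inferInstance, hK,
    gaiso_transfer (A.val : A →+* F) Subtype.val_injective p e a ha b hb⟩
end

section
/- Let p be a prime, let F be a field of characteristic p, and let G and H be finite groups. If the group algebras FG and FH are isomorphic as F-algebras, then there exists a finite field F₀ of characteristic p such that F₀G and F₀H are isomorphic as F₀-algebras. -/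
namespace IsoAux

theorem map_smul_aux {R S K : Type*} [CommRing R] [CommRing S] [Monoid K]
    (f : R →+* S) (r : R) (y : MonoidAlgebra R K) :
    MonoidAlgebra.mapRingHom K f (r • y) = f r • MonoidAlgebra.mapRingHom K f y := by
  ext k
  simp

theorem lift_map {R S G H : Type*} [CommRing R] [CommRing S] [Monoid G] [Monoid H]
    (f : R →+* S) (v : H →* MonoidAlgebra R G) (x : MonoidAlgebra R H) :
    MonoidAlgebra.lift S (MonoidAlgebra S G) H
      ((MonoidAlgebra.mapRingHom G f : _ →* MonoidAlgebra S G).comp v)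
      (MonoidAlgebra.mapRingHom H f x) =
    MonoidAlgebra.mapRingHom G f (MonoidAlgebra.lift R (MonoidAlgebra R G) H v x) := by
  induction x using MonoidAlgebra.induction_on with
  | of g => simp
  | add x y hx hy => simp only [map_add, hx, hy]
  | smul r x hx =>
    rw [map_smul_aux, map_smul, hx, map_smul, map_smul_aux]

/-- Descent of a monoid hom along an injective ring hom. -/
theorem descend {R S G H : Type*} [CommRing R] [CommRing S] [Monoid G] [Monoid H]
    (f : R →+* S) (hf : Function.Injective (MonoidAlgebra.mapRingHom H f))
    (u : G →* MonoidAlgebra S H)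
    (hu : ∀ g, ∃ x, MonoidAlgebra.mapRingHom H f x = u g) :
    ∃ w : G →* MonoidAlgebra R H,
      (MonoidAlgebra.mapRingHom H f : _ →* MonoidAlgebra S H).comp w = u := by
  choose w hw using hu
  refine ⟨⟨⟨w, hf ?_⟩, fun a b => hf ?_⟩, ?_⟩
  · rw [hw, map_one, map_one]
  · simp only [hw, map_mul]
  · ext1 g
    exact hw g

theorem equiv_of {R G H : Type*} [CommRing R] [Monoid G] [Monoid H]
    (u : G →* MonoidAlgebra R H) (v : H →* MonoidAlgebra R G)
    (h1 : ∀ g, MonoidAlgebra.lift R _ H v (u g) = MonoidAlgebra.single g 1)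
    (h2 : ∀ k, MonoidAlgebra.lift R _ G u (v k) = MonoidAlgebra.single k 1) :
    Nonempty (MonoidAlgebra R G ≃ₐ[R] MonoidAlgebra R H) := by
  refine ⟨AlgEquiv.ofAlgHom (MonoidAlgebra.lift R _ G u) (MonoidAlgebra.lift R _ H v) ?_ ?_⟩
  · apply MonoidAlgebra.algHom_ext
    intro k
    simp [h2]
    exact Subsingleton.elim _ _
  · apply MonoidAlgebra.algHom_ext
    intro k
    simp [h1]
    exact Subsingleton.elim _ _

theorem mapRingHom_injective {R S H : Type*} [CommRing R] [CommRing S] [Monoid H]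
    (f : R →+* S) (hf : Function.Injective f) :
    Function.Injective (MonoidAlgebra.mapRingHom H f) := by
  intro x y hxy
  ext k
  apply hf
  have := congrArg (fun z => z.coeff k) hxy
  simpa using this

theorem mapRingHom_surj {R S H : Type*} [CommRing R] [CommRing S] [Monoid H] [Finite H]
    (f : R →+* S) (y : MonoidAlgebra S H) (hy : ∀ k, ∃ r, f r = y.coeff k) :
    ∃ x, MonoidAlgebra.mapRingHom H f x = y := by
  choose r hr using hy
  refine ⟨MonoidAlgebra.ofCoeff (Finsupp.equivFunOnFinite.symm r), ?_⟩
  ext k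
  simp [hr]

theorem exists_finite_quotient (p : ℕ) [Fact p.Prime] (A : Type*) [CommRing A] [Nontrivial A]
    [Algebra (ZMod p) A] [Algebra.FiniteType (ZMod p) A] :
    ∃ (F₀ : Type) (_ : Field F₀) (_ : Finite F₀) (_ : CharP F₀ p), Nonempty (A →+* F₀) := by
  obtain ⟨m, hm⟩ := Ideal.exists_maximal A
  let : Field (A ⧸ m) := Ideal.Quotient.field m
  have hfin : Module.Finite (ZMod p) (A ⧸ m) := by
    have : Algebra.FiniteType (ZMod p) (A ⧸ m) := inferInstance
    exact finite_of_finite_type_of_isJacobsonRing (ZMod p) (A ⧸ m)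
  have hfi : Finite (A ⧸ m) := Module.finite_of_finite (ZMod p)
  have f : A →+* Shrink.{0} (A ⧸ m) :=
    (Shrink.ringEquiv.{0} (A ⧸ m)).symm.toRingHom.comp (Ideal.Quotient.mk m)
  refine ⟨Shrink.{0} (A ⧸ m), inferInstance, inferInstance, ?_, ⟨f⟩⟩
  exact charP_of_injective_ringHom (f.comp (algebraMap (ZMod p) A)).injective p

end IsoAux

/-- Let `p` be a prime, `F` a field of characteristic `p`, and `G`, `H` finite groups. If
`FG ≅ FH` as `F`-algebras, then there is a finite field `F₀` of characteristic `p` with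
`F₀G ≅ F₀H` as `F₀`-algebras. -/
theorem isomorphism_problem_char_p_reduces_to_finite_fields
    (p : ℕ) (hp : p.Prime) (F : Type*) [Field F] [CharP F p]
    (G H : Type*) [Group G] [Group H] [Finite G] [Finite H]
    (h : Nonempty (MonoidAlgebra F G ≃ₐ[F] MonoidAlgebra F H)) :
    ∃ (F₀ : Type) (_ : Field F₀) (_ : Finite F₀) (_ : CharP F₀ p),
      Nonempty (MonoidAlgebra F₀ G ≃ₐ[F₀] MonoidAlgebra F₀ H) := by
  obtain ⟨e⟩ := h
  have : Fact p.Prime := ⟨hp⟩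
  let : Algebra (ZMod p) F := ZMod.algebra F p
  let u : G →* MonoidAlgebra F H := (e : _ →* MonoidAlgebra F H).comp (MonoidAlgebra.of F G)
  let v : H →* MonoidAlgebra F G := (e.symm : _ →* MonoidAlgebra F G).comp (MonoidAlgebra.of F H)
  have hu : MonoidAlgebra.lift F _ G u = (e : _ →ₐ[F] _) := by
    apply MonoidAlgebra.algHom_ext
    intro k
    simp [u]
    exact Subsingleton.elim _ _
  have hv : MonoidAlgebra.lift F _ H v = (e.symm : _ →ₐ[F] _) := by
    apply MonoidAlgebra.algHom_ext
    intro k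
    simp [v]
    exact Subsingleton.elim _ _
  let s : Set F := (Set.range fun q : G × H => (u q.1).coeff q.2) ∪
    (Set.range fun q : G × H => (v q.2).coeff q.1)
  have hs : s.Finite := (Set.finite_range _).union (Set.finite_range _)
  let A := Algebra.adjoin (ZMod p) s
  have : Algebra.FiniteType (ZMod p) A :=
    Algebra.FiniteType.adjoin_of_finite hs
  let i : A →+* F := algebraMap A F
  have hi : Function.Injective i := Subtype.val_injective
  obtain ⟨u', hu'⟩ := IsoAux.descend i (IsoAux.mapRingHom_injective i hi) u (fun g =>
    IsoAux.mapRingHom_surj i _ fun k =>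
      ⟨⟨(u g).coeff k, Algebra.subset_adjoin (Or.inl ⟨(g, k), rfl⟩)⟩, rfl⟩)
  obtain ⟨v', hv'⟩ := IsoAux.descend i (IsoAux.mapRingHom_injective i hi) v (fun k =>
    IsoAux.mapRingHom_surj i _ fun g =>
      ⟨⟨(v k).coeff g, Algebra.subset_adjoin (Or.inr ⟨(g, k), rfl⟩)⟩, rfl⟩)
  have h1 : ∀ g, MonoidAlgebra.lift A _ H v' (u' g) = MonoidAlgebra.single g 1 := by
    intro g
    apply IsoAux.mapRingHom_injective i hi
    have hg : MonoidAlgebra.mapRingHom H i (u' g) = u g := DFunLike.congr_fun hu' g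
    rw [← IsoAux.lift_map, hv', hv, hg]
    simp [u]
  have h2 : ∀ k, MonoidAlgebra.lift A _ G u' (v' k) = MonoidAlgebra.single k 1 := by
    intro k
    apply IsoAux.mapRingHom_injective i hi
    have hg : MonoidAlgebra.mapRingHom G i (v' k) = v k := DFunLike.congr_fun hv' k
    rw [← IsoAux.lift_map, hu', hu, hg]
    simp [v]
  obtain ⟨F₀, hF, hfin, hch, ⟨f⟩⟩ := IsoAux.exists_finite_quotient p A
  refine ⟨F₀, hF, hfin, hch, IsoAux.equiv_of
    ((MonoidAlgebra.mapRingHom H f : _ →* MonoidAlgebra F₀ H).comp u')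
    ((MonoidAlgebra.mapRingHom G f : _ →* MonoidAlgebra F₀ G).comp v') ?_ ?_⟩
  · intro g
    have := IsoAux.lift_map f v' (u' g)
    rw [h1] at this
    simpa using this
  · intro k
    have := IsoAux.lift_map f u' (v' k)
    rw [h2] at this
    simpa using this
end

section
/- Let p be a prime and let G and H be finite p-groups such that FG and FH are isomorphic as F-algebras for some field F of characteristic p. Then there exists a finite field F₀ of characteristic p such that F₀G and F₀H are isomorphic as F₀-algebras. -/
theorem mip_lift_map {R S G H : Type*} [CommRing R] [CommRing S] [Group G] [Group H]
    (f : R →+* S) (b : H →* MonoidAlgebra R G) (x : MonoidAlgebra R H) :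
    MonoidAlgebra.lift S (MonoidAlgebra S G) H
      ((MonoidAlgebra.mapRingHom G f).toMonoidHom.comp b) (MonoidAlgebra.mapRingHom H f x)
      = MonoidAlgebra.mapRingHom G f (MonoidAlgebra.lift R (MonoidAlgebra R G) H b x) := by
  have key : ((MonoidAlgebra.lift S (MonoidAlgebra S G) H
      ((MonoidAlgebra.mapRingHom G f).toMonoidHom.comp b)).toRingHom.comp
        (MonoidAlgebra.mapRingHom H f))
      = (MonoidAlgebra.mapRingHom G f).comp
        (MonoidAlgebra.lift R (MonoidAlgebra R G) H b).toRingHom := by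
    refine MonoidAlgebra.ringHom_ext ?_ ?_
    · intro r
      simp [Algebra.smul_def]
    · intro h
      simp
  exact RingHom.congr_fun key x

theorem mip_map_injective {R S G : Type*} [CommRing R] [CommRing S] [Group G]
    (f : R →+* S) (hf : Function.Injective f) :
    Function.Injective (MonoidAlgebra.mapRingHom G f) := by
  intro x y hxy
  ext g
  apply hf
  rw [← MonoidAlgebra.coeff_mapRingHom, hxy, MonoidAlgebra.coeff_mapRingHom]

theorem mip_exists_preimage {R S G : Type*} [CommRing R] [CommRing S] [Group G] [Finite G]
    (f : R →+* S) (x : MonoidAlgebra S G) (hx : ∀ g, ∃ r, f r = x.coeff g) :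
    ∃ y, MonoidAlgebra.mapRingHom G f y = x := by
  choose r hr using hx
  refine ⟨.ofCoeff (Finsupp.equivFunOnFinite.symm r), ?_⟩
  ext g
  simp [hr]

/-- A monoid homomorphism into a group algebra whose values have coefficients in a subring
factors through the group algebra over the subring. -/
theorem mip_descend {R S G H : Type*} [CommRing R] [CommRing S] [Group G] [Group H] [Finite H]
    (f : R →+* S) (hf : Function.Injective f) (a : G →* MonoidAlgebra S H)
    (ha : ∀ g h, ∃ r, f r = (a g).coeff h) :
    ∃ a' : G →* MonoidAlgebra R H,
      (MonoidAlgebra.mapRingHom H f).toMonoidHom.comp a' = a := by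
  choose y hy using fun g => mip_exists_preimage f (a g) (ha g)
  refine ⟨{ toFun := y, map_one' := ?_, map_mul' := ?_ }, ?_⟩
  · apply mip_map_injective f hf
    rw [hy, map_one, map_one]
  · intro g h
    apply mip_map_injective f hf
    rw [hy, map_mul, map_mul, hy, hy]
  · ext1 g
    exact hy g

/-- **Corollary (Modular Isomorphism Problem).** Let `G` and `H` be finite `p`-groups such
that `FG ≅ FH` as `F`-algebras for some field `F` of characteristic `p`. Then there is a
finite field `F₀` of characteristic `p` with `F₀G ≅ F₀H` as `F₀`-algebras. -/
theorem modular_isomorphism_problem_reduces_to_finite_fields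
    (p : ℕ) (hp : p.Prime) (G H : Type*) [Group G] [Group H] [Finite G] [Finite H]
    (hG : IsPGroup p G) (hH : IsPGroup p H)
    (F : Type*) [Field F] [CharP F p]
    (h : Nonempty (MonoidAlgebra F G ≃ₐ[F] MonoidAlgebra F H)) :
    ∃ (F₀ : Type) (_ : Field F₀) (_ : Finite F₀) (_ : CharP F₀ p),
      Nonempty (MonoidAlgebra F₀ G ≃ₐ[F₀] MonoidAlgebra F₀ H) := by
  classical
  obtain ⟨φ⟩ := h
  haveI : Fact p.Prime := ⟨hp⟩
  letI : Algebra (ZMod p) F := ZMod.algebra F p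
  let a : G →* MonoidAlgebra F H := φ.toAlgHom.toRingHom.toMonoidHom.comp (MonoidAlgebra.of F G)
  let b : H →* MonoidAlgebra F G :=
    φ.symm.toAlgHom.toRingHom.toMonoidHom.comp (MonoidAlgebra.of F H)
  have hla : MonoidAlgebra.lift F (MonoidAlgebra F H) G a = φ.toAlgHom := by
    ext g : 2
    simp [a]
  have hlb : MonoidAlgebra.lift F (MonoidAlgebra F G) H b = φ.symm.toAlgHom := by
    ext g : 2
    simp [b]
  let T : Set F := Set.range (fun q : G × H => (a q.1).coeff q.2) ∪
    Set.range (fun q : H × G => (b q.1).coeff q.2)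
  have hT : T.Finite := (Set.finite_range _).union (Set.finite_range _)
  let A := Algebra.adjoin (ZMod p) T
  have hft : Algebra.FiniteType (ZMod p) A :=
    A.fg_iff_finiteType.1 ⟨hT.toFinset, by simp [A]⟩
  let ι : A →+* F := A.val.toRingHom
  have hι : Function.Injective ι := Subtype.val_injective
  obtain ⟨a', ha'⟩ := mip_descend ι hι a (fun g h =>
    ⟨⟨_, Algebra.subset_adjoin (Or.inl ⟨(g, h), rfl⟩)⟩, rfl⟩)
  obtain ⟨b', hb'⟩ := mip_descend ι hι b (fun g h =>
    ⟨⟨_, Algebra.subset_adjoin (Or.inr ⟨(g, h), rfl⟩)⟩, rfl⟩)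
  have hba : ∀ g, MonoidAlgebra.lift A (MonoidAlgebra A G) H b' (a' g) =
      MonoidAlgebra.of A G g := by
    intro g
    apply mip_map_injective ι hι
    rw [← mip_lift_map, hb', hlb]
    have : MonoidAlgebra.mapRingHom H ι (a' g) = a g := DFunLike.congr_fun ha' g
    rw [this]
    simp [a]
  have hab : ∀ g, MonoidAlgebra.lift A (MonoidAlgebra A H) G a' (b' g) =
      MonoidAlgebra.of A H g := by
    intro g
    apply mip_map_injective ι hι
    rw [← mip_lift_map, ha', hla]
    have : MonoidAlgebra.mapRingHom G ι (b' g) = b g := DFunLike.congr_fun hb' g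
    rw [this]
    simp [b]
  obtain ⟨m, hm⟩ := Ideal.exists_maximal A
  letI : Field (A ⧸ m) := Ideal.Quotient.field m
  have hfin : Module.Finite (ZMod p) (A ⧸ m) :=
    finite_of_finite_type_of_isJacobsonRing (ZMod p) (A ⧸ m)
  have hK : Finite (A ⧸ m) := Module.finite_of_finite (ZMod p)
  let π : A →+* Shrink.{0} (A ⧸ m) :=
    (Shrink.ringEquiv (A ⧸ m)).symm.toRingHom.comp (Ideal.Quotient.mk m)
  have hchar : CharP (Shrink.{0} (A ⧸ m)) p :=
    charP_of_injective_ringHom (f := π.comp (algebraMap (ZMod p) A)) (RingHom.injective _) p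
  refine ⟨Shrink.{0} (A ⧸ m), inferInstance, inferInstance, hchar, ⟨?_⟩⟩
  refine AlgEquiv.ofAlgHom
    (MonoidAlgebra.lift _ _ G ((MonoidAlgebra.mapRingHom H π).toMonoidHom.comp a'))
    (MonoidAlgebra.lift _ _ H ((MonoidAlgebra.mapRingHom G π).toMonoidHom.comp b')) ?_ ?_
  · refine MonoidAlgebra.algHom_ext' (MonoidHom.ext fun h => ?_) (by ext)
    have := mip_lift_map π a' (b' h)
    rw [hab] at this
    simpa using this
  · refine MonoidAlgebra.algHom_ext' (MonoidHom.ext fun g => ?_) (by ext)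
    have := mip_lift_map π b' (a' g)
    rw [hba] at this
    simpa using this
end

section
/- Let ℙ ⊆ E ⊆ F be fields inside a fixed algebraic closure, where ℙ is a prime field, E/ℙ is purely transcendental of finite transcendence degree (i.e., E = ℙ(X₁,…,Xₘ) for a finite algebraically independent family X₁,…,Xₘ over ℙ), and F/E is a finite normal extension. Then there exists a finite algebraic extension L of E (inside the algebraic closure) such that L/ℙ is purely transcendental of finite transcendence degree and the compositum LF is a finite Galois extension of L. -/
/-- A subfield `K` of `Ω` is purely transcendental of finite transcendence degree over the
prime field `ℙ = ⊥` if it is generated (as a field; every subfield contains the prime field)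
by a finite set which is algebraically independent over `ℙ`. -/
def IsPurelyTranscendentalFinOverPrimeField {Ω : Type*} [Field Ω] (K : Subfield Ω) : Prop :=
  ∃ s : Finset Ω, (s : Set Ω) ⊆ (K : Set Ω) ∧
    AlgebraicIndependent (⊥ : Subfield Ω) ((↑) : ↥(s : Set Ω) → Ω) ∧
    Subfield.closure (s : Set Ω) = K

theorem fixes_bot_aux {Ω : Type*} [Field Ω] (σ : Ω →+* Ω) (x : Ω) (hx : x ∈ (⊥ : Subfield Ω)) :
    σ x = x := by
  have h : (⊥ : Subfield Ω) ≤ RingHom.eqLocusField σ (RingHom.id Ω) := bot_le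
  exact h hx

theorem map_pt_aux {Ω : Type*} [Field Ω] (σ : Ω →+* Ω) (E : Subfield Ω) (s : Finset Ω)
    (hi : AlgebraicIndependent (⊥ : Subfield Ω) ((↑) : ↥(s : Set Ω) → Ω))
    (hc : Subfield.closure (s : Set Ω) = E) :
    IsPurelyTranscendentalFinOverPrimeField (E.map σ) := by
  classical
  have hcl : Subfield.closure (σ '' (s : Set Ω)) = E.map σ := by
    rw [← hc, RingHom.map_field_closure]
  refine ⟨s.image σ, ?_, ?_, ?_⟩
  · rw [Finset.coe_image, ← hcl]
    exact Subfield.subset_closure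
  · let τ : Ω →ₐ[(⊥ : Subfield Ω)] Ω :=
      { σ with commutes' := fun r => fixes_bot_aux σ r r.2 }
    have h1 := (hi.map' (f := τ) τ.injective).coe_range
    have h2 : Set.range (τ ∘ ((↑) : ↥(s : Set Ω) → Ω)) = ((s.image σ : Finset Ω) : Set Ω) := by
      rw [Set.range_comp, Subtype.range_coe, Finset.coe_image]
      rfl
    rw [h2] at h1
    exact h1
  · rw [Finset.coe_image, hcl]

theorem exists_exponent_aux {E F : Type*} [Field E] [Field F] [Algebra E F]
    [FiniteDimensional E F] (q : ℕ) [ExpChar E q] :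
    ∃ n : ℕ, ∀ x : F, IsSeparable E (x ^ q ^ n) := by
  have : ExpChar (separableClosure E F) q :=
    expChar_of_injective_algebraMap (algebraMap E (separableClosure E F)).injective q
  refine ⟨IsPurelyInseparable.exponent (separableClosure E F) F, fun x => ?_⟩
  obtain ⟨y, hy⟩ := IsPurelyInseparable.exponent_def' (separableClosure E F) q x
  rw [← hy]
  exact mem_separableClosure_iff.1 y.2

theorem isSeparable_map_aux {Ω : Type*} [Field Ω] (σ : Ω ≃+* Ω) (E : Subfield Ω) (y : Ω)
    (hy : IsSeparable E y) : IsSeparable (E.map (σ : Ω →+* Ω)) (σ y) := by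
  let e₁ : E ≃+* E.map (σ : Ω →+* Ω) :=
    { toFun := fun x => ⟨σ x, ⟨x, x.2, rfl⟩⟩
      invFun := fun x => ⟨σ.symm x, by
        obtain ⟨_, ⟨z, hz, rfl⟩⟩ := x
        simpa using hz⟩
      left_inv := fun x => Subtype.ext (σ.symm_apply_apply _)
      right_inv := fun x => Subtype.ext (σ.apply_symm_apply _)
      map_mul' := fun x z => Subtype.ext (map_mul σ _ _)
      map_add' := fun x z => Subtype.ext (map_add σ _ _) }
  exact hy.of_equiv_equiv e₁ σ (RingHom.ext fun _ => rfl)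

theorem isSeparable_pow_aux (E F Ω : Type*) [Field E] [Field F] [Field Ω] [Algebra E F]
    [Algebra F Ω] [Algebra E Ω] [IsScalarTower E F Ω] (x : F) (m : ℕ)
    (h : IsSeparable E (x ^ m)) : IsSeparable E (algebraMap F Ω x ^ m) := by
  rw [← map_pow]
  exact h.map (IsScalarTower.toAlgHom E F Ω) (algebraMap F Ω).injective

theorem isSeparable_sup_aux {Ω : Type*} [Field Ω] (L F : Subfield Ω)
    (hF : ∀ x ∈ F, IsSeparable L x) :
    letI := (Subfield.inclusion (le_sup_left : L ≤ L ⊔ F)).toAlgebra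
    Algebra.IsSeparable L ↥(L ⊔ F) := by
  let algLM := (Subfield.inclusion (le_sup_left : L ≤ L ⊔ F)).toAlgebra
  have : IsScalarTower L ↥(L ⊔ F) Ω := IsScalarTower.of_algebraMap_eq (fun _ => rfl)
  have hle : L ⊔ F ≤ (separableClosure L Ω).toSubfield :=
    sup_le (fun x hx => (separableClosure L Ω).algebraMap_mem ⟨x, hx⟩)
      (fun x hx => mem_separableClosure_iff.2 (hF x hx))
  exact ⟨fun x => IsSeparable.of_algHom (IsScalarTower.toAlgHom L ↥(L ⊔ F) Ω)
      (mem_separableClosure_iff.1 (hle x.2))⟩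

/-- Let `ℙ ⊆ E ⊆ F` be fields inside a fixed algebraic closure `Ω`, where `ℙ` is the prime
field, `E/ℙ` is purely transcendental of finite transcendence degree, and `F/E` is a finite
normal extension. Then there is a finite algebraic extension `L` of `E` inside `Ω` such that
`L/ℙ` is purely transcendental of finite transcendence degree and the compositum `LF = L ⊔ F`
is a finite Galois extension of `L`. -/
theorem exists_purely_transcendental_with_galois_compositum
    {Ω : Type*} [Field Ω] [IsAlgClosed Ω] (E F : Subfield Ω) (hEF : E ≤ F)
    (hE : IsPurelyTranscendentalFinOverPrimeField E)
    (hfin : letI := (Subfield.inclusion hEF).toAlgebra; FiniteDimensional E F)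
    (hnorm : letI := (Subfield.inclusion hEF).toAlgebra; Normal E F) :
    ∃ L : Subfield Ω, ∃ hEL : E ≤ L,
      (letI := (Subfield.inclusion hEL).toAlgebra; FiniteDimensional E L) ∧
      IsPurelyTranscendentalFinOverPrimeField L ∧
      (letI := (Subfield.inclusion (le_sup_left : L ≤ L ⊔ F)).toAlgebra;
        FiniteDimensional L ↥(L ⊔ F) ∧ IsGalois L ↥(L ⊔ F)) := by
  obtain ⟨q, hq⟩ := ExpChar.exists Ω
  have : ExpChar E q := (algebraMap E Ω).expChar (algebraMap E Ω).injective q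
  letI algEF := (Subfield.inclusion hEF).toAlgebra
  have : FiniteDimensional E F := hfin
  have : Normal E F := hnorm
  have towEF : IsScalarTower E F Ω := IsScalarTower.of_algebraMap_eq (fun _ => rfl)
  obtain ⟨n, hn⟩ := exists_exponent_aux (E := E) (F := F) q
  have hn' : ∀ x ∈ F, IsSeparable E (x ^ q ^ n) := fun x hx =>
    isSeparable_pow_aux E F Ω ⟨x, hx⟩ (q ^ n) (hn ⟨x, hx⟩)
  obtain ⟨s, hsE, hi, hc⟩ := hE
  let σ : Ω ≃+* Ω := (iterateFrobeniusEquiv Ω q n).symm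
  have hσ : ∀ x, σ x ^ q ^ n = x := fun x => (iterateFrobeniusEquiv Ω q n).apply_symm_apply x
  have hσ' : ∀ x, σ (x ^ q ^ n) = x := fun x => (iterateFrobeniusEquiv Ω q n).symm_apply_apply x
  let L : Subfield Ω := E.map (σ : Ω →+* Ω)
  have hEL : E ≤ L := fun x hx => ⟨x ^ q ^ n, pow_mem hx _, hσ' x⟩
  have hFsep : ∀ x ∈ F, IsSeparable L x := by
    intro x hx
    have h2 := isSeparable_map_aux σ E _ (hn' x hx)
    rwa [hσ'] at h2
  have hLpow : ∀ x ∈ L, x ^ q ^ n ∈ E := by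
    rintro _ ⟨y, hy, rfl⟩
    exact (hσ y).symm ▸ hy
  let L' : IntermediateField E Ω := Subfield.extendScalars hEL
  let F' : IntermediateField E Ω := Subfield.extendScalars hEF
  -- finiteness of `L/E`
  have hL'fin : FiniteDimensional E L' := by
    have hle : L' ≤ IntermediateField.adjoin E (σ '' (s : Set Ω)) := by
      change L ≤ (IntermediateField.adjoin E (σ '' (s : Set Ω))).toSubfield
      have : L = Subfield.closure (σ '' (s : Set Ω)) := by
        change E.map (σ : Ω →+* Ω) = _
        rw [← hc, RingHom.map_field_closure]
        rfl
      rw [this, Subfield.closure_le]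
      exact IntermediateField.subset_adjoin E _
    have : Finite (σ '' (s : Set Ω)) := (s.finite_toSet.image σ).to_subtype
    have : FiniteDimensional E (IntermediateField.adjoin E (σ '' (s : Set Ω))) := by
      apply IntermediateField.finiteDimensional_adjoin
      rintro _ ⟨y, hy, rfl⟩
      refine IsIntegral.of_pow (n := q ^ n) (pow_pos (expChar_pos Ω q) n) ?_
      rw [hσ]
      exact isIntegral_algebraMap (x := (⟨y, hsE hy⟩ : E))
    exact Module.Finite.of_injective (IntermediateField.inclusion hle).toLinearMap
      (IntermediateField.inclusion hle).injective
  have hL'pi : IsPurelyInseparable E L' := by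
    rw [isPurelyInseparable_iff_pow_mem E q]
    intro x
    exact ⟨n, ⟨x.1 ^ q ^ n, hLpow x.1 x.2⟩, Subtype.ext rfl⟩
  have hF'fin : FiniteDimensional E F' := hfin
  have hF'norm : Normal E F' := hnorm
  have hsup : (L' ⊔ F').toSubfield = L ⊔ F := by
    apply le_antisymm
    · have h : L' ⊔ F' ≤ Subfield.extendScalars (hEL.trans (le_sup_left : L ≤ L ⊔ F)) :=
        sup_le (fun x hx => (le_sup_left : L ≤ L ⊔ F) hx)
          (fun x hx => (le_sup_right : F ≤ L ⊔ F) hx)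
      exact h
    · exact sup_le (fun x hx => (le_sup_left : L' ≤ L' ⊔ F') hx)
        (fun x hx => (le_sup_right : F' ≤ L' ⊔ F') hx)
  have hsup' : L' ⊔ F' = Subfield.extendScalars (hEL.trans (le_sup_left : L ≤ L ⊔ F)) :=
    SetLike.ext (fun x => by
      rw [Subfield.mem_extendScalars, ← hsup]; rfl)
  have hMfin : FiniteDimensional E ↥(L' ⊔ F') := inferInstance
  have hMnorm : Normal E ↥(L' ⊔ F') := inferInstance
  rw [hsup'] at hMfin hMnorm
  refine ⟨L, hEL, hL'fin, map_pt_aux (σ : Ω →+* Ω) E s hi hc, ?_⟩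
  letI algEL := (Subfield.inclusion hEL).toAlgebra
  letI algLM := (Subfield.inclusion (le_sup_left : L ≤ L ⊔ F)).toAlgebra
  letI algEM := (Subfield.inclusion (hEL.trans (le_sup_left : L ≤ L ⊔ F))).toAlgebra
  have : IsScalarTower E L ↥(L ⊔ F) := IsScalarTower.of_algebraMap_eq (fun _ => rfl)
  have : IsScalarTower L ↥(L ⊔ F) Ω := IsScalarTower.of_algebraMap_eq (fun _ => rfl)
  have : FiniteDimensional E ↥(L ⊔ F) := hMfin
  have : Normal E ↥(L ⊔ F) := hMnorm
  have : Normal L ↥(L ⊔ F) := Normal.tower_top_of_normal E L ↥(L ⊔ F)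
  have : FiniteDimensional L ↥(L ⊔ F) := FiniteDimensional.right E L ↥(L ⊔ F)
  have : Algebra.IsSeparable L ↥(L ⊔ F) := isSeparable_sup_aux L F hFsep
  exact ⟨inferInstance, ⟨⟩⟩
end

section
/- For every prime field ℙ and every positive integer n, there exist a prime q different from the characteristic of ℙ and a positive integer k such that: F[(C_q)^k] is not isomorphic to F[C_{q^k}] as F-algebras for every field extension F of ℙ with [F : ℙ] ≤ n, but E[(C_q)^k] is isomorphic to E[C_{q^k}] as E-algebras for some field extension E of ℙ. -/
theorem groupAlg_split (F G : Type*) [Field F] [CommGroup G] [Fintype G]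
    [HasEnoughRootsOfUnity F (Monoid.exponent G)] :
    Nonempty (MonoidAlgebra F G ≃ₐ[F] (G → F)) := by
  classical
  obtain ⟨e⟩ := CommGroup.monoidHom_mulEquiv_of_hasEnoughRootsOfUnity G F
  let χ : G → (G →* F) := fun h => (Units.coeHom F).comp (e.symm h)
  have hχ : Function.Injective χ := by
    intro a b hab
    apply e.symm.injective
    ext g
    exact DFunLike.congr_fun hab g
  let A : Matrix G G F := Matrix.of fun h g => χ h g
  have hA : IsUnit A := by
    rw [← Matrix.linearIndependent_rows_iff_isUnit]
    exact (linearIndependent_monoidHom G F).comp χ hχ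
  let φ : MonoidAlgebra F G →ₐ[F] (G → F) := AlgHom.pi fun h => MonoidAlgebra.lift F F G (χ h)
  have hφ : ∀ x, φ x = A.mulVec (fun g => x.coeff g) := by
    intro x
    ext h
    simp only [φ, AlgHom.pi_apply, MonoidAlgebra.lift_apply, Matrix.mulVec, dotProduct]
    rw [Finsupp.sum_fintype _ _ (by simp)]
    simp [A, mul_comm]
  refine ⟨AlgEquiv.ofBijective φ ⟨?_, ?_⟩⟩
  · intro x y hxy
    rw [hφ, hφ] at hxy
    have := Matrix.mulVec_injective_of_isUnit hA hxy
    ext g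
    exact congrFun this g
  · intro v
    obtain ⟨c, hc⟩ := Matrix.mulVec_surjective_iff_isUnit.2 hA v
    refine ⟨MonoidAlgebra.ofCoeff (Finsupp.equivFunOnFinite.symm c), ?_⟩
    rw [hφ, ← hc]
    rfl

theorem groupAlg_iso (F G H : Type*) [Field F] [CommGroup G] [Fintype G]
    [CommGroup H] [Fintype H] [IsAlgClosed F] (hc : Nat.card G = Nat.card H)
    (hG : (Nat.card G : F) ≠ 0) : 
    Nonempty (MonoidAlgebra F G ≃ₐ[F] MonoidAlgebra F H) := by
  have key : ∀ (K : Type _) [CommGroup K] [Fintype K], (Nat.card K : F) ≠ 0 →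
      HasEnoughRootsOfUnity F (Monoid.exponent K) := by
    intro K _ _ hK
    have : NeZero ((Monoid.exponent K : ℕ) : F) := ⟨fun h => hK (by
      obtain ⟨c, hc⟩ := Group.exponent_dvd_nat_card (G := K)
      rw [hc]; push_cast; rw [h, zero_mul])⟩
    infer_instance
  have key2 : ∀ (K : Type _) [CommGroup K] [Fintype K], (Nat.card K : F) ≠ 0 →
      HasEnoughRootsOfUnity F (Monoid.exponent K) := by
    intro K _ _ hK
    have : NeZero ((Monoid.exponent K : ℕ) : F) := ⟨fun h => hK (by
      obtain ⟨c, hc⟩ := Group.exponent_dvd_nat_card (G := K)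
      rw [hc]; push_cast; rw [h, zero_mul])⟩
    infer_instance
  have := key G hG
  have := key2 H (hc ▸ hG)
  obtain ⟨a⟩ := groupAlg_split F G
  obtain ⟨b⟩ := groupAlg_split F H
  obtain ⟨e⟩ := Finite.card_eq.1 hc
  exact ⟨a.trans ((AlgEquiv.piCongrLeft F (fun _ : H => F) e).trans b.symm)⟩

theorem not_iso_char_zero (F : Type*) [Field F] [CharZero F] [FiniteDimensional ℚ F] (k : ℕ)
    (h : Module.finrank ℚ F < 2 ^ k) :
    IsEmpty (MonoidAlgebra F (Fin (k+1) → Multiplicative (ZMod 2)) ≃ₐ[F]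
          MonoidAlgebra F (Multiplicative (ZMod (2 ^ (k+1))))) := by
  refine ⟨fun e => ?_⟩
  have h2 : HasEnoughRootsOfUnity F 2 :=
    ⟨⟨-1, IsPrimitiveRoot.neg_one 0 (by norm_num)⟩, inferInstance⟩
  have hexp : Monoid.exponent (Fin (k+1) → Multiplicative (ZMod 2)) ∣ 2 := by
    rw [Monoid.exponent_dvd_iff_forall_pow_eq_one]
    intro g; funext i
    have : ∀ a : Multiplicative (ZMod 2), a ^ 2 = 1 := by decide
    exact this _
  have := HasEnoughRootsOfUnity.of_dvd F hexp
  obtain ⟨s⟩ := groupAlg_split F (Fin (k+1) → Multiplicative (ZMod 2))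
  let f := e.symm.trans s
  let g : Multiplicative (ZMod (2 ^ (k+1))) := Multiplicative.ofAdd 1
  let u := f (MonoidAlgebra.of F _ g)
  have ho : orderOf g = 2 ^ (k+1) := by
    simp [g, orderOf_ofAdd_eq_addOrderOf, ZMod.addOrderOf_one]
  have h1 : u ^ 2 ^ (k+1) = 1 := by
    simp only [u]
    rw [← map_pow, ← map_pow, orderOf_dvd_iff_pow_eq_one.1 ho.dvd, map_one, map_one]
  have h3 : u ^ 2 ^ k ≠ 1 := by
    intro hu
    simp only [u] at hu
    rw [← map_pow, ← map_pow, ← map_one f, f.injective.eq_iff,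
      ← map_one (MonoidAlgebra.of F (Multiplicative (ZMod (2 ^ (k+1))))),
      (MonoidAlgebra.of_injective).eq_iff, ← orderOf_dvd_iff_pow_eq_one, ho] at hu
    have := (Nat.pow_dvd_pow_iff_le_right (by norm_num)).1 hu
    omega
  obtain ⟨i, hi⟩ := Function.ne_iff.1 h3
  have hi1 := congrFun h1 i
  have hord : orderOf (u i) = 2 ^ (k+1) := orderOf_eq_prime_pow hi hi1
  have hprim : IsPrimitiveRoot (u i) (2 ^ (k+1)) := hord ▸ IsPrimitiveRoot.orderOf (u i)
  have hm := Polynomial.cyclotomic_eq_minpoly_rat hprim (by positivity)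
  have hd := minpoly.natDegree_le (A := ℚ) (u i)
  rw [← hm, Polynomial.natDegree_cyclotomic, Nat.totient_prime_pow_succ Nat.prime_two] at hd
  omega

theorem not_iso_char_p (F : Type*) [Field F] (p : ℕ) [Fact p.Prime] [CharP F p] (n d : ℕ)
    (hd : d ≤ n) (hd0 : 0 < d) (hcard : Nat.card F = p ^ d) (q k : ℕ) (hq : q.Prime) (hpq : q ≠ p) 
    (h : p ^ (n * (q - 1)) < q ^ k) :
    IsEmpty (MonoidAlgebra F (Fin k → Multiplicative (ZMod q)) ≃ₐ[F]
          MonoidAlgebra F (Multiplicative (ZMod (q ^ k)))) := by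
  refine ⟨fun e => ?_⟩
  have hp : p.Prime := Fact.out
  have : Finite F := Nat.finite_of_card_ne_zero (by rw [hcard]; exact pow_ne_zero _ hp.ne_zero)
  have := Fintype.ofFinite F
  have hq2 := hq.two_le
  have hF : ∀ a : F, a ^ p ^ (d * (q - 1)) = a := by
    intro a
    rw [pow_mul, ← hcard, Nat.card_eq_fintype_card]
    exact FiniteField.pow_card_pow _ a
  have hmod : p ^ (d * (q-1)) ≡ 1 [MOD q] := by
    rw [mul_comm, pow_mul]
    have := Nat.ModEq.pow_totient ((Nat.coprime_primes hp hq).2 hpq.symm)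
    rw [Nat.totient_prime hq] at this
    simpa using this.pow d
  have hmul : 1 ≤ p ^ (d * (q-1)) := Nat.one_le_pow _ _ hp.pos
  have hG : ∀ g : Fin k → Multiplicative (ZMod q), g ^ p ^ (d * (q-1)) = g := by
    intro g
    funext i
    have : (g i) ^ q = 1 := by
      apply Multiplicative.toAdd.injective
      simp
    obtain ⟨c, hc⟩ := (Nat.modEq_iff_dvd' hmul).1 hmod.symm
    have h' : p ^ (d * (q-1)) = q * c + 1 := by omega
    rw [Pi.pow_apply, h', pow_succ, pow_mul, this, one_pow, one_mul]
  have : CharP (MonoidAlgebra F (Fin k → Multiplicative (ZMod q))) p :=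
    charP_of_injective_algebraMap (algebraMap F _).injective p
  have hA : ∀ x : MonoidAlgebra F (Fin k → Multiplicative (ZMod q)), x ^ p ^ (d * (q-1)) = x := by
    intro x
    induction x using MonoidAlgebra.induction_linear with
    | zero => exact zero_pow (by omega)
    | add f g hf hg => rw [add_pow_char_pow, hf, hg]
    | single a b => rw [MonoidAlgebra.single_pow, hF, hG]
  let g : Multiplicative (ZMod (q ^ k)) := Multiplicative.ofAdd 1
  have ho : orderOf g = q ^ k := by
    simp [g, orderOf_ofAdd_eq_addOrderOf, ZMod.addOrderOf_one]
  have h1 : g ^ p ^ (d * (q-1)) = g := by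
    apply MonoidAlgebra.of_injective (R := F)
    apply e.symm.injective
    rw [map_pow, map_pow, hA]
  have h2 : g ^ (p ^ (d * (q-1)) - 1) = 1 := by
    have : g ^ (p ^ (d * (q-1)) - 1) * g = g := by
      rw [← pow_succ, Nat.sub_add_cancel hmul, h1]
    simpa using this
  have h3 := Nat.le_of_dvd (Nat.sub_pos_of_lt (Nat.one_lt_pow
    (Nat.mul_ne_zero hd0.ne' (by omega)) hp.one_lt)) (ho ▸ orderOf_dvd_of_pow_eq_one h2)
  have h4 : p ^ (d * (q-1)) ≤ p ^ (n * (q-1)) :=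
    Nat.pow_le_pow_right hp.pos (Nat.mul_le_mul_right _ hd)
  omega

universe u v w in
theorem exists_E (K : Type) [Field K] (P : Type u) [Field P] (e : K ≃+* P) (q k : ℕ)
    (hq : q.Prime) (hqP : q ≠ ringChar P) :
    ∃ (E : Type v) (_ : Field E) (_ : Algebra P E),
        Nonempty (MonoidAlgebra E (Fin k → Multiplicative (ZMod q)) ≃ₐ[E]
          MonoidAlgebra E (Multiplicative (ZMod (q ^ k)))) := by
  let E := ULift.{v} (AlgebraicClosure K)
  let i : P →+* E := (ULift.ringEquiv.symm : AlgebraicClosure K ≃+* E).toRingHom.comp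
    ((algebraMap K (AlgebraicClosure K)).comp e.symm.toRingHom)
  refine ⟨E, inferInstance, i.toAlgebra, ?_⟩
  have hE : IsAlgClosed E := by
    constructor
    intro f
    have := IsAlgClosed.splits (k := AlgebraicClosure K) (f.map (ULift.ringEquiv : E ≃+* AlgebraicClosure K).toRingHom)
    have := this.map (ULift.ringEquiv : E ≃+* AlgebraicClosure K).symm.toRingHom
    simpa [Polynomial.map_map] using this
  have : NeZero q := ⟨hq.ne_zero⟩
  have : NeZero (q ^ k) := ⟨pow_ne_zero _ hq.ne_zero⟩
  apply groupAlg_iso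
  · simp
  · have : Nat.card (Fin k → Multiplicative (ZMod q)) = q ^ k := by simp
    rw [this]
    push_cast
    apply pow_ne_zero
    intro h0
    have h1 : i (q : P) = 0 := by rw [map_natCast]; exact h0
    have h2 : (q : P) = 0 := i.injective (by rw [h1, map_zero])
    exact hqP (CharP.ringChar_of_prime_eq_zero hq h2).symm

/-- **Example.** For every prime field `P` (a field with no proper subfields) and every
positive integer `n`, there are a prime `q` different from the characteristic of `P` and a
positive integer `k` such that `F[(C_q)^k] ≇ F[C_{q^k}]` for every field extension `F` of `P`
of degree at most `n`, while `E[(C_q)^k] ≅ E[C_{q^k}]` for some field extension `E` of `P`. -/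
theorem exists_prime_power_cyclic_group_algebras_distinguishing_small_extensions
    (P : Type*) [Field P] (hP : ∀ s : Subfield P, s = ⊤) (n : ℕ) (hn : 0 < n) :
    ∃ q k : ℕ, q.Prime ∧ q ≠ ringChar P ∧ 0 < k ∧
      (∀ (F : Type*) [Field F] [Algebra P F] [FiniteDimensional P F],
        Module.finrank P F ≤ n →
        IsEmpty (MonoidAlgebra F (Fin k → Multiplicative (ZMod q)) ≃ₐ[F]
          MonoidAlgebra F (Multiplicative (ZMod (q ^ k))))) ∧
      (∃ (E : Type*) (_ : Field E) (_ : Algebra P E),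
        Nonempty (MonoidAlgebra E (Fin k → Multiplicative (ZMod q)) ≃ₐ[E]
          MonoidAlgebra E (Multiplicative (ZMod (q ^ k))))) := by
  obtain ⟨p, hp⟩ := CharP.exists P
  rcases Nat.eq_zero_or_pos p with rfl | hp0
  · have : CharZero P := CharP.charP_to_charZero P
    have hs : Function.Surjective (algebraMap ℚ P) := by
      rw [← RingHom.fieldRange_eq_top_iff]; exact hP _
    let e : ℚ ≃+* P := RingEquiv.ofBijective (algebraMap ℚ P) ⟨(algebraMap ℚ P).injective, hs⟩
    have hq : 2 ≠ ringChar P := by rw [ringChar.eq_zero]; norm_num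
    refine ⟨2, n + 1, Nat.prime_two, hq, Nat.succ_pos _, ?_, exists_E ℚ P e _ _ Nat.prime_two hq⟩
    intro F _ _ _ hF
    have : CharZero F := charZero_of_injective_algebraMap (algebraMap P F).injective
    have hfr : Module.finrank ℚ F = Module.finrank P F :=
      Algebra.finrank_eq_of_equiv_equiv e (RingEquiv.refl F) (Subsingleton.elim _ _)
    have hpos : 0 < Module.finrank P F := Module.finrank_pos
    have : FiniteDimensional ℚ F := Module.finite_of_finrank_pos (by omega)
    exact not_iso_char_zero F n (by rw [hfr]; exact hF.trans_lt Nat.lt_two_pow_self)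
  · have hpp : p.Prime := (CharP.char_is_prime_or_zero P p).resolve_right hp0.ne'
    have : Fact p.Prime := ⟨hpp⟩
    have hs : Function.Surjective (ZMod.castHom (dvd_refl p) P) := by
      rw [← RingHom.fieldRange_eq_top_iff]; exact hP _
    let e : ZMod p ≃+* P :=
      RingEquiv.ofBijective (ZMod.castHom (dvd_refl p) P) ⟨RingHom.injective _, hs⟩
    obtain ⟨q, hqp, hq⟩ := Nat.exists_infinite_primes (p + 1)
    have hne : q ≠ ringChar P := by rw [ringChar.eq P p]; omega
    let k := p ^ (n * (q - 1))
    refine ⟨q, k, hq, hne, Nat.pow_pos hp0, ?_, exists_E (ZMod p) P e _ _ hq hne⟩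
    intro F _ _ _ hF
    have : CharP F p := charP_of_injective_algebraMap (algebraMap P F).injective p
    have : Finite P := Finite.of_equiv _ e.toEquiv
    have hcP : Nat.card P = p := by rw [← Nat.card_congr e.toEquiv, Nat.card_zmod]
    refine not_iso_char_p F p n (Module.finrank P F) hF Module.finrank_pos ?_ q k hq (by omega)
      (Nat.lt_pow_self hq.one_lt)
    rw [Module.natCard_eq_pow_finrank (K := P), hcP]
end

section
/- Let k be a positive integer and let F be a field of characteristic 0 that is a finite extension of ℚ with [F : ℚ] < 2^{k-1}. Then the group algebras F[(C₂)^k] and F[C_{2^k}] are not isomorphic as F-algebras. -/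
/-- Let `k ≥ 1` and let `F` be a field of characteristic `0` which is a finite extension of
`ℚ` with `[F : ℚ] < 2^(k-1)`. Then `F[(C₂)^k] ≇ F[C_{2^k}]` as `F`-algebras. -/
theorem monoidAlgebra_elementary_abelian_two_ne_cyclic_of_small_degree
    (k : ℕ) (hk : 0 < k) (F : Type*) [Field F] [CharZero F] [FiniteDimensional ℚ F]
    (hdeg : Module.finrank ℚ F < 2 ^ (k - 1)) :
    IsEmpty (MonoidAlgebra F (Fin k → Multiplicative (ZMod 2)) ≃ₐ[F]
      MonoidAlgebra F (Multiplicative (ZMod (2 ^ k)))) := by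
  refine ⟨fun e => ?_⟩
  have : NeZero (2 ^ k) := ⟨by positivity⟩
  have : NeZero ((2 ^ k : ℕ) : AlgebraicClosure F) := ⟨by simp⟩
  obtain ⟨ζ, hζ⟩ := HasEnoughRootsOfUnity.exists_primitiveRoot (AlgebraicClosure F) (2 ^ k)
  let u : (AlgebraicClosure F)ˣ := (hζ.isUnit (NeZero.ne _)).unit
  have hu : (u : AlgebraicClosure F) = ζ := rfl
  have hu1 : u ^ (2 ^ k) = 1 := by
    ext
    simpa [hu] using hζ.pow_eq_one
  -- the character of the cyclic group sending the generator to `ζ`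
  let f : ℤ →+ Additive (AlgebraicClosure F)ˣ := zmultiplesHom _ (Additive.ofMul u)
  have hf : f (2 ^ k : ℕ) = 0 := by
    change ((2 ^ k : ℕ) : ℤ) • Additive.ofMul u = 0
    rw [natCast_zsmul, ← ofMul_pow, hu1, ofMul_one]
  let χ : Multiplicative (ZMod (2 ^ k)) →* (AlgebraicClosure F)ˣ :=
    AddMonoidHom.toMultiplicativeLeft (ZMod.lift (2 ^ k) ⟨f, hf⟩)
  have hχ : χ (Multiplicative.ofAdd 1) = u := by
    change (ZMod.lift (2 ^ k) ⟨f, hf⟩ (1 : ZMod (2 ^ k))).toMul = u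
    have h := ZMod.lift_coe (2 ^ k) ⟨f, hf⟩ 1
    rw [Int.cast_one] at h
    rw [h]
    simp [f]
  let φ : MonoidAlgebra F (Multiplicative (ZMod (2 ^ k))) →ₐ[F] AlgebraicClosure F :=
    MonoidAlgebra.lift F _ _ ((Units.coeHom _).comp χ)
  let ψ := φ.comp e.toAlgHom
  have hψ : ∀ x, ψ x ∈ (⊥ : Subalgebra F (AlgebraicClosure F)) := by
    intro x
    induction x using MonoidAlgebra.induction_on with
    | of g =>
      have hg : g * g = 1 := by
        funext i
        exact (by decide : ∀ a : Multiplicative (ZMod 2), a * a = 1) (g i)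
      have h : ψ (MonoidAlgebra.of F _ g) * ψ (MonoidAlgebra.of F _ g) = 1 := by
        rw [← map_mul, ← map_mul, hg, map_one, map_one]
      rcases mul_self_eq_one_iff.mp h with h | h <;> rw [h]
      · exact one_mem _
      · exact neg_mem (one_mem _)
    | add a b ha hb => rw [map_add]; exact add_mem ha hb
    | smul r a ha => rw [map_smul]; exact Subalgebra.smul_mem _ ha r
  have hz := hψ (e.symm (MonoidAlgebra.of F _ (Multiplicative.ofAdd 1)))
  have hz' : ψ (e.symm (MonoidAlgebra.of F _ (Multiplicative.ofAdd 1))) = ζ := by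
    change φ (e (e.symm _)) = ζ
    rw [e.apply_symm_apply, MonoidAlgebra.lift_of, ← hu, ← hχ]
    rfl
  rw [hz', Algebra.mem_bot] at hz
  obtain ⟨z, rfl⟩ := hz
  have hzp : IsPrimitiveRoot z (2 ^ k) :=
    hζ.of_map_of_injective (FaithfulSMul.algebraMap_injective F (AlgebraicClosure F))
  have h1 := minpoly.natDegree_le (A := ℚ) z
  rw [← Polynomial.cyclotomic_eq_minpoly_rat hzp (by positivity),
    Polynomial.natDegree_cyclotomic, Nat.totient_prime_pow Nat.prime_two hk] at h1
  omega
end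

section
/- Let p be an odd prime, let q be a prime divisor of p − 1, let k be a positive integer, and let F be a finite field of characteristic p with [F : 𝔽_p] = t. If t < ord_{q^k}(p), the multiplicative order of p modulo q^k, then the group algebras F[(C_q)^k] and F[C_{q^k}] are not isomorphic as F-algebras. -/
/-- In a commutative group algebra over a finite field with `p ^ t` elements, if `g ^ (p ^ t) = g`
for all group elements, then `x ^ (p ^ t) = x` for all elements of the algebra. -/
theorem pow_card_eq_self_aux (p : ℕ) (hp : p.Prime) (F : Type*) [Field F] [Finite F] [CharP F p]
    (t : ℕ) (hc : Nat.card F = p ^ t) (G : Type*) [CommGroup G]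
    (hG : ∀ g : G, g ^ (p ^ t) = g) (x : MonoidAlgebra F G) : x ^ (p ^ t) = x := by
  haveI : Fact p.Prime := ⟨hp⟩
  haveI : CharP (MonoidAlgebra F G) p :=
    charP_of_injective_algebraMap (algebraMap F (MonoidAlgebra F G)).injective p
  haveI : Fintype F := Fintype.ofFinite F
  induction x using MonoidAlgebra.induction_linear with
  | zero => exact zero_pow (pow_ne_zero _ hp.ne_zero)
  | add f g hf hg => rw [add_pow_char_pow, hf, hg]
  | single g a =>
    rw [MonoidAlgebra.single_pow, hG, ← hc, Nat.card_eq_fintype_card, FiniteField.pow_card]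

/-- Let `p` be an odd prime, `q` a prime divisor of `p - 1`, `k ≥ 1`, and `F` a finite field
of characteristic `p` with `[F : 𝔽_p] = t`. If `t` is smaller than the multiplicative order
of `p` modulo `q^k`, then `F[(C_q)^k] ≇ F[C_{q^k}]` as `F`-algebras. -/
theorem monoidAlgebra_not_equiv_of_degree_lt_order
    (p : ℕ) (hp : p.Prime) (hodd : Odd p) (q : ℕ) (hq : q.Prime) (hdvd : q ∣ p - 1)
    (k : ℕ) (hk : 0 < k) (F : Type*) [Field F] [Finite F] [CharP F p] (t : ℕ)
    (ht : letI := ZMod.algebra F p; Module.finrank (ZMod p) F = t)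
    (hlt : t < orderOf ((p : ZMod (q ^ k)))) :
    IsEmpty (MonoidAlgebra F (Fin k → Multiplicative (ZMod q)) ≃ₐ[F]
      MonoidAlgebra F (Multiplicative (ZMod (q ^ k)))) := by
  refine ⟨fun e => ?_⟩
  haveI : Fact p.Prime := ⟨hp⟩
  letI := ZMod.algebra F p
  have ht' : Module.finrank (ZMod p) F = t := ht
  have hc : Nat.card F = p ^ t := by
    rw [← ht', Module.natCard_eq_pow_finrank (K := ZMod p), Nat.card_zmod]
  have htpos : 0 < t := by
    rw [← ht']; exact Module.finrank_pos
  have hpq : (p : ZMod q) = 1 := by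
    have h1 := (Nat.modEq_iff_dvd' hp.one_le).2 hdvd
    have := (ZMod.natCast_eq_natCast_iff _ _ _).2 h1
    simpa using this.symm
  have hA := pow_card_eq_self_aux p hp F t hc (Fin k → Multiplicative (ZMod q)) (by
    intro g
    funext i
    apply Multiplicative.toAdd.injective
    simp [toAdd_pow, hpq])
  set g : MonoidAlgebra F (Multiplicative (ZMod (q ^ k))) :=
    MonoidAlgebra.single (Multiplicative.ofAdd 1) 1 with hg
  have h2 : g ^ (p ^ t) = g := by
    have := congrArg e (hA (e.symm g))
    simpa using this
  rw [hg, MonoidAlgebra.single_pow, one_pow] at h2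
  have h3 := MonoidAlgebra.single_left_injective (one_ne_zero) h2
  have h4 : (p : ZMod (q ^ k)) ^ t = 1 := by
    have := congrArg Multiplicative.toAdd h3
    simpa [toAdd_pow] using this
  exact absurd (orderOf_le_of_pow_eq_one htpos h4) (not_le.2 hlt)
end

section
/- Let p be an odd prime, let q be a prime different from p, let k be a positive integer, and let F be a finite field of characteristic p with [F : 𝔽_p] = t. If p^t ≡ 1 (mod q^k), then the group algebras F[(C_q)^k] and F[C_{q^k}] are isomorphic as F-algebras, both being isomorphic to the product algebra F^{q^k}. -/
theorem groupAlgebra_split {F G : Type*} [Field F] [CommGroup G] [Finite G] (n : ℕ)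
    (hn : Nat.card G = n) [HasEnoughRootsOfUnity F (Monoid.exponent G)] :
    Nonempty (MonoidAlgebra F G ≃ₐ[F] (Fin n → F)) := by
  classical
  have hcard : Nat.card (G →* Fˣ) = n :=
    (CommGroup.card_monoidHom_of_hasEnoughRootsOfUnity G F).trans hn
  have hpos : n ≠ 0 := by rw [← hn]; exact Nat.card_pos.ne'
  haveI : Finite (G →* Fˣ) := Nat.finite_of_card_ne_zero (by rw [hcard]; exact hpos)
  let e : (G →* Fˣ) ≃ Fin n := Finite.equivFinOfCardEq hcard
  let χ : Fin n → (G →* F) := fun i => (Units.coeHom F).comp (e.symm i)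
  have hχ : Function.Injective χ := by
    intro i j h
    apply e.symm.injective
    ext g
    exact DFunLike.congr_fun h g
  let Φ : MonoidAlgebra F G →ₐ[F] (Fin n → F) :=
    MonoidAlgebra.lift F (Fin n → F) G (Pi.monoidHom χ)
  have hli := (linearIndependent_monoidHom G F).comp χ hχ
  have hsurj : Function.Surjective Φ.toLinearMap := by
    rw [← LinearMap.range_eq_top]
    by_contra hne
    obtain ⟨f, hf0, hf⟩ := Submodule.exists_le_ker_of_lt_top _ (lt_top_iff_ne_top.mpr hne)
    apply hf0
    have key : ∀ i, f (Pi.single i 1) = 0 := by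
      apply Fintype.linearIndependent_iff.mp hli
      funext g
      have h1 : f (Φ (MonoidAlgebra.of F G g)) = 0 := hf ⟨MonoidAlgebra.of F G g, rfl⟩
      rw [MonoidAlgebra.lift_of, LinearMap.pi_apply_eq_sum_univ] at h1
      simp only [Finset.sum_apply, Pi.smul_apply, smul_eq_mul, Function.comp, Pi.zero_apply]
      rw [← h1]
      refine Finset.sum_congr rfl fun i _ => ?_
      rw [smul_eq_mul, mul_comm]
      congr 2
      funext j
      simp [Pi.single_apply, eq_comm]
    apply LinearMap.pi_ext'
    intro i
    ext
    simpa using key i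
  haveI : Module.Finite F (MonoidAlgebra F G) := inferInstance
  have hfr : Module.finrank F (MonoidAlgebra F G) = Module.finrank F (Fin n → F) := by
    have : Fintype G := Fintype.ofFinite G
    rw [(MonoidAlgebra.coeffLinearEquiv F : MonoidAlgebra F G ≃ₗ[F] _).finrank_eq]
    simp [← hn]
  have hinj := (LinearMap.injective_iff_surjective_of_finrank_eq_finrank hfr).mpr hsurj
  exact ⟨AlgEquiv.ofBijective Φ ⟨hinj, hsurj⟩⟩


/-- Let `p` be an odd prime, `q` a prime different from `p`, `k ≥ 1`, and `F` a finite field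
of characteristic `p` with `[F : 𝔽_p] = t`. If `p^t ≡ 1 (mod q^k)`, then
`F[(C_q)^k] ≅ F[C_{q^k}]` as `F`-algebras, both being isomorphic to `F^{q^k}`. -/
theorem monoidAlgebra_equiv_of_pow_congr_one
    (p : ℕ) (hp : p.Prime) (hodd : Odd p) (q : ℕ) (hq : q.Prime) (hne : q ≠ p)
    (k : ℕ) (hk : 0 < k) (F : Type*) [Field F] [Finite F] [CharP F p] (t : ℕ)
    (ht : letI := ZMod.algebra F p; Module.finrank (ZMod p) F = t)
    (hcong : p ^ t ≡ 1 [MOD q ^ k]) :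
    Nonempty (MonoidAlgebra F (Fin k → Multiplicative (ZMod q)) ≃ₐ[F]
      MonoidAlgebra F (Multiplicative (ZMod (q ^ k)))) ∧
    Nonempty (MonoidAlgebra F (Fin k → Multiplicative (ZMod q)) ≃ₐ[F] (Fin (q ^ k) → F)) ∧
    Nonempty (MonoidAlgebra F (Multiplicative (ZMod (q ^ k))) ≃ₐ[F] (Fin (q ^ k) → F)) := by
  letI := ZMod.algebra F p
  haveI : Fact p.Prime := ⟨hp⟩
  haveI : Fact q.Prime := ⟨hq⟩
  haveI : NeZero q := ⟨hq.ne_zero⟩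
  haveI : NeZero (q ^ k) := ⟨pow_ne_zero _ hq.ne_zero⟩
  have hF : Nat.card F = p ^ t := by
    rw [Module.natCard_eq_pow_finrank (K := ZMod p) (V := F), Nat.card_zmod]
    exact congrArg _ ht
  have hdvd : q ^ k ∣ Nat.card Fˣ := by
    rw [Nat.card_units, hF]
    exact (Nat.modEq_iff_dvd' (Nat.one_le_pow _ _ hp.pos)).mp hcong.symm
  have hroots : HasEnoughRootsOfUnity F (q ^ k) := by
    refine ⟨?_, inferInstance⟩
    obtain ⟨g, hg⟩ := IsCyclic.exists_ofOrder_eq_natCard (α := Fˣ)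
    obtain ⟨m, hm⟩ := hdvd
    have h1 : IsPrimitiveRoot (g : F) (Nat.card Fˣ) := by
      rw [← hg, IsPrimitiveRoot.coe_units_iff]
      exact IsPrimitiveRoot.orderOf g
    exact ⟨_, h1.pow Nat.card_pos (by rw [hm, mul_comm])⟩
  have c1 : Nat.card (Fin k → Multiplicative (ZMod q)) = q ^ k := by
    simp [Nat.card_pi]
  have c2 : Nat.card (Multiplicative (ZMod (q ^ k))) = q ^ k := by
    simp
  have A1 : Nonempty (MonoidAlgebra F (Fin k → Multiplicative (ZMod q)) ≃ₐ[F]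
      (Fin (q ^ k) → F)) := by
    haveI := HasEnoughRootsOfUnity.of_dvd F (m := Monoid.exponent (Fin k → Multiplicative (ZMod q)))
      (n := q ^ k) (by rw [← c1]; exact Group.exponent_dvd_nat_card)
    exact groupAlgebra_split _ c1
  have A2 : Nonempty (MonoidAlgebra F (Multiplicative (ZMod (q ^ k))) ≃ₐ[F]
      (Fin (q ^ k) → F)) := by
    haveI := HasEnoughRootsOfUnity.of_dvd F (m := Monoid.exponent (Multiplicative (ZMod (q ^ k))))
      (n := q ^ k) (by conv_rhs => rw [← c2]
                       exact Group.exponent_dvd_nat_card)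
    exact groupAlgebra_split _ c2
  exact ⟨⟨A1.some.trans A2.some.symm⟩, A1, A2⟩
end

section
/- Let k be a positive integer and let F be a finite field of characteristic 2 with [F : 𝔽₂] = t. If t < 3^{k-1}, then the group algebras F[(C₃)^k] and F[C_{3^k}] are not isomorphic as F-algebras. -/
theorem aux_three_pow_dvd (k t : ℕ) (ht : 0 < t) (h : 3 ^ k ∣ 4 ^ t - 1) : 3 ^ (k - 1) ∣ t := by
  haveI : Fact (Nat.Prime 3) := ⟨Nat.prime_three⟩
  have h1 := padicValNat.pow_sub_pow (p := 3) (x := 4) (y := 1) (by norm_num) (by decide)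
    (by norm_num) (by norm_num) (n := t) ht.ne'
  have h2 : 4 ^ t - 1 ≠ 0 := by
    have := Nat.one_lt_pow ht.ne' (show 1 < 4 by norm_num)
    omega
  rw [padicValNat_dvd_iff_le h2] at h
  rw [padicValNat_dvd_iff_le ht.ne']
  simp only [one_pow] at h1
  have h3 : padicValNat 3 (4 - 1) = 1 := padicValNat.self (by norm_num)
  omega

/-- Let `k ≥ 1` and let `F` be a finite field of characteristic `2` with `[F : 𝔽₂] = t`.
If `t < 3^(k-1)`, then `F[(C₃)^k] ≇ F[C_{3^k}]` as `F`-algebras. -/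
theorem monoidAlgebra_not_equiv_char_two_of_small_degree
    (k : ℕ) (hk : 0 < k) (F : Type*) [Field F] [Finite F] [CharP F 2] (t : ℕ)
    (ht : letI := ZMod.algebra F 2; Module.finrank (ZMod 2) F = t)
    (hlt : t < 3 ^ (k - 1)) :
    IsEmpty (MonoidAlgebra F (Fin k → Multiplicative (ZMod 3)) ≃ₐ[F]
      MonoidAlgebra F (Multiplicative (ZMod (3 ^ k)))) := by
  letI := ZMod.algebra F 2
  haveI : Fact (Nat.Prime 2) := ⟨Nat.prime_two⟩
  replace ht : Module.finrank (ZMod 2) F = t := ht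
  have htpos : 0 < t := ht ▸ Module.finrank_pos
  letI := Fintype.ofFinite F
  have hcard : Fintype.card F = 2 ^ t := by
    rw [Module.card_eq_pow_finrank (K := ZMod 2) (V := F), ht, ZMod.card]
  refine ⟨fun e => ?_⟩
  haveI : CharP (MonoidAlgebra F (Fin k → Multiplicative (ZMod 3))) 2 :=
    charP_of_injective_algebraMap
      (algebraMap F (MonoidAlgebra F (Fin k → Multiplicative (ZMod 3)))).injective 2
  have hpow : 2 ^ (2 * t) = 4 ^ t := by rw [pow_mul]; norm_num
  have h4 : 1 ≤ 4 ^ t := Nat.one_le_pow _ _ (by norm_num)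
  have hF : ∀ a : F, a ^ (2 ^ (2 * t)) = a := by
    intro a
    rw [mul_comm, pow_mul, ← hcard, FiniteField.pow_card_pow]
  have hG : ∀ g : Fin k → Multiplicative (ZMod 3), g ^ (2 ^ (2 * t)) = g := by
    intro g
    have h3 : g ^ 3 = 1 := by
      funext i
      have : Multiplicative.toAdd (g i ^ 3) = 0 := by
        rw [toAdd_pow]
        generalize Multiplicative.toAdd (g i) = x
        revert x; decide
      exact this
    obtain ⟨m, hm⟩ : 3 ∣ 4 ^ t - 1 := by
      simpa using Nat.sub_dvd_pow_sub_pow 4 1 t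
    have : 2 ^ (2 * t) = 3 * m + 1 := by omega
    rw [this, pow_succ, pow_mul, h3, one_pow, one_mul]
  have hid : iterateFrobenius (MonoidAlgebra F (Fin k → Multiplicative (ZMod 3))) 2 (2 * t)
      = RingHom.id _ := by
    apply MonoidAlgebra.ringHom_ext
    · intro a
      simp [iterateFrobenius_def, MonoidAlgebra.single_pow, hF]
    · intro g
      simp [iterateFrobenius_def, MonoidAlgebra.single_pow, hG]
  let g : Multiplicative (ZMod (3 ^ k)) := Multiplicative.ofAdd 1
  have hx : (MonoidAlgebra.of F _ g) ^ (2 ^ (2 * t)) = MonoidAlgebra.of F _ g := by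
    apply e.symm.injective
    rw [map_pow]
    have := RingHom.congr_fun hid (e.symm (MonoidAlgebra.of F _ g))
    rwa [iterateFrobenius_def] at this
  rw [← map_pow] at hx
  have hg := MonoidAlgebra.of_injective hx
  have hz : ((4 ^ t : ℕ) : ZMod (3 ^ k)) = ((1 : ℕ) : ZMod (3 ^ k)) := by
    have := congrArg Multiplicative.toAdd hg
    rw [toAdd_pow, hpow] at this
    simpa [g] using this
  have hd : 3 ^ k ∣ 4 ^ t - 1 := by
    rw [ZMod.natCast_eq_natCast_iff] at hz
    exact (Nat.modEq_iff_dvd' h4).mp hz.symm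
  exact absurd (Nat.le_of_dvd htpos (aux_three_pow_dvd k t htpos hd)) (by omega)
end

section
/- Let k be a positive integer and let F be a finite field of characteristic 2 with [F : 𝔽₂] = t. If 2^t ≡ 1 (mod 3^k), then the group algebras F[(C₃)^k] and F[C_{3^k}] are isomorphic as F-algebras, both being isomorphic to the product algebra F^{3^k}. -/
lemma aux_surj (F G : Type*) [Field F] [CommGroup G] [Finite G] (n : ℕ) [NeZero n]
    (hn : Monoid.exponent G ∣ n) (z : F) (hz : IsPrimitiveRoot z n) :
    Nonempty (MonoidAlgebra F G ≃ₐ[F] (Fin (Nat.card G) → F)) := by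
  classical
  haveI : HasEnoughRootsOfUnity F n := ⟨⟨z, hz⟩, inferInstance⟩
  haveI : HasEnoughRootsOfUnity F (Monoid.exponent G) := HasEnoughRootsOfUnity.of_dvd F hn
  obtain ⟨e⟩ := CommGroup.monoidHom_mulEquiv_of_hasEnoughRootsOfUnity G F
  haveI := Fintype.ofFinite G
  haveI : Finite (G →* Fˣ) := Finite.of_equiv _ e.symm.toEquiv
  haveI := Fintype.ofFinite (G →* Fˣ)
  let φ : MonoidAlgebra F G →ₐ[F] ((G →* Fˣ) → F) :=
    Pi.algHom F _ fun χ => MonoidAlgebra.lift F F G ((Units.coeHom F).comp χ)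
  have hφ (χ : G →* Fˣ) (g : G) : φ (MonoidAlgebra.of F G g) χ = (χ g : F) := by
    simp [φ]
  have hsurj : Function.Surjective φ.toLinearMap := by
    rw [← LinearMap.dualMap_injective_iff, injective_iff_map_eq_zero]
    intro f hf
    have hli : LinearIndependent F (fun χ : G →* Fˣ => (fun g => (χ g : F) : G → F)) :=
      (linearIndependent_monoidHom G F).comp (fun χ : G →* Fˣ => (Units.coeHom F).comp χ) (by
        intro a b h
        ext g
        exact DFunLike.congr_fun h g)
    rw [Fintype.linearIndependent_iff] at hli
    have := hli (fun χ => f (Pi.single χ 1)) (by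
      ext g
      have h1 := LinearMap.congr_fun hf (MonoidAlgebra.of F G g)
      have h2 : φ (MonoidAlgebra.of F G g) = ∑ χ : G →* Fˣ, (χ g : F) • Pi.single χ (1:F) := by
        ext χ
        rw [hφ]
        simp [Finset.sum_apply, Pi.single_apply]
      simp only [LinearMap.dualMap_apply, AlgHom.toLinearMap_apply, h2, map_sum, map_smul] at h1
      simpa [mul_comm] using h1)
    ext χ
    simpa using this χ
  have hc : Nat.card (G →* Fˣ) = Nat.card G := Nat.card_congr e.toEquiv
  have hr : Module.finrank F (MonoidAlgebra F G) = Module.finrank F ((G →* Fˣ) → F) := by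
    rw [Module.finrank_pi, ← Nat.card_eq_fintype_card, hc, Nat.card_eq_fintype_card]
    exact Module.finrank_eq_card_basis (MonoidAlgebra.basis G F)
  haveI : FiniteDimensional F (MonoidAlgebra F G) :=
    Module.Basis.finiteDimensional_of_finite (MonoidAlgebra.basis G F)
  have hinj : Function.Injective φ.toLinearMap :=
    (LinearMap.injective_iff_surjective_of_finrank_eq_finrank hr).2 hsurj
  exact ⟨(AlgEquiv.ofBijective φ ⟨hinj, hsurj⟩).trans
    (AlgEquiv.piCongrLeft F (fun _ => F) (Finite.equivFinOfCardEq hc))⟩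

theorem monoidAlgebra_equiv_char_two_of_pow_congr_one
    (k : ℕ) (hk : 0 < k) (F : Type*) [Field F] [Finite F] [CharP F 2] (t : ℕ)
    (ht : letI := ZMod.algebra F 2; Module.finrank (ZMod 2) F = t)
    (hcong : 2 ^ t ≡ 1 [MOD 3 ^ k]) :
    Nonempty (MonoidAlgebra F (Fin k → Multiplicative (ZMod 3)) ≃ₐ[F]
      MonoidAlgebra F (Multiplicative (ZMod (3 ^ k)))) ∧
    Nonempty (MonoidAlgebra F (Fin k → Multiplicative (ZMod 3)) ≃ₐ[F] (Fin (3 ^ k) → F)) ∧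
    Nonempty (MonoidAlgebra F (Multiplicative (ZMod (3 ^ k))) ≃ₐ[F] (Fin (3 ^ k) → F)) := by
  have hcard : Nat.card F = 2 ^ t := by
    letI := ZMod.algebra F 2
    haveI := Fintype.ofFinite F
    rw [← ht, Nat.card_eq_fintype_card, Module.card_eq_pow_finrank (K := ZMod 2), ZMod.card]
  have hdvd : 3 ^ k ∣ Nat.card Fˣ := by
    rw [Nat.card_units, hcard]
    exact (Nat.modEq_iff_dvd' Nat.one_le_two_pow).1 hcong.symm
  obtain ⟨m, hm⟩ := hdvd
  obtain ⟨u, hu⟩ := IsCyclic.exists_ofOrder_eq_natCard (α := Fˣ)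
  have hz : IsPrimitiveRoot ((u ^ m : Fˣ) : F) (3 ^ k) := by
    rw [IsPrimitiveRoot.coe_units_iff]
    exact (hu ▸ IsPrimitiveRoot.orderOf u).pow Nat.card_pos (by rw [hm, mul_comm])
  have c1 : Nat.card (Fin k → Multiplicative (ZMod 3)) = 3 ^ k := by
    simp [Nat.card_pi]
  have c2 : Nat.card (Multiplicative (ZMod (3 ^ k))) = 3 ^ k := by
    simp
  haveI : NeZero (3 ^ k) := ⟨by positivity⟩
  haveI : Finite (Multiplicative (ZMod (3 ^ k))) := Nat.finite_of_card_ne_zero (by rw [c2]; positivity)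
  have h1 := aux_surj F (Fin k → Multiplicative (ZMod 3)) (3 ^ k)
    (c1 ▸ Group.exponent_dvd_nat_card) _ hz
  have h2 := aux_surj F (Multiplicative (ZMod (3 ^ k))) (3 ^ k)
    (by simpa [c2] using Group.exponent_dvd_nat_card (G := Multiplicative (ZMod (3 ^ k)))) _ hz
  rw [c1] at h1
  rw [c2] at h2
  obtain ⟨e1⟩ := h1
  obtain ⟨e2⟩ := h2
  exact ⟨⟨e1.trans e2.symm⟩, ⟨e1⟩, ⟨e2⟩⟩
end

section
/- Let F be a finite field of characteristic 2 with [F : 𝔽₂] = t. If t is even, then the group algebra F[C₃] is isomorphic as an F-algebra to F³; if t is odd, then F[C₃] is isomorphic as an F-algebra to F × K, where K is a field extension of F of degree 2. -/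
set_option linter.style.haveILetI false
open Polynomial in
theorem aux_fin (F : Type*) [Field F] [CharP F 2] :
    Module.finrank F (MonoidAlgebra F (Multiplicative (ZMod 3))) = 3 := by
  rw [Module.finrank_eq_card_basis (MonoidAlgebra.basis (Multiplicative (ZMod 3)) F)]
  rfl

/-- The monoid hom from `C₃` sending the generator to `w`. -/
def auxHom {A : Type*} [Monoid A] (w : A) (hw : w ^ 3 = 1) : Multiplicative (ZMod 3) →* A where
  toFun g := w ^ (Multiplicative.toAdd g).val
  map_one' := by simp
  map_mul' a b := by
    rw [toAdd_mul, ZMod.val_add, ← pow_eq_pow_mod _ hw, pow_add]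

theorem aux_equiv (F : Type*) [Field F] [CharP F 2] {A : Type*} [Ring A] [Algebra F A]
    [Module.Finite F A]
    (hA : Module.finrank F A = 3) (w : A) (hw : w ^ 3 = 1)
    (hinj : ∀ a b c : F, a • (1 : A) + b • w + c • w ^ 2 = 0 → a = 0 ∧ b = 0 ∧ c = 0) :
    Nonempty (MonoidAlgebra F (Multiplicative (ZMod 3)) ≃ₐ[F] A) := by
  let f := MonoidAlgebra.lift F A (Multiplicative (ZMod 3)) (auxHom w hw)
  haveI : Module.Finite F (MonoidAlgebra F (Multiplicative (ZMod 3))) :=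
    Module.finite_of_finrank_pos (by rw [aux_fin]; norm_num)
  have hi : Function.Injective f.toLinearMap := by
    rw [injective_iff_map_eq_zero]
    intro x hx
    have hx2 : f x = 0 := hx
    have key : f x = x.coeff (Multiplicative.ofAdd 0) • (1 : A) + x.coeff (Multiplicative.ofAdd 1) • w
        + x.coeff (Multiplicative.ofAdd 2) • w ^ 2 := by
      simp only [f, MonoidAlgebra.lift_apply]
      rw [Finsupp.sum_fintype _ _ (by simp)]
      refine (Fin.sum_univ_three (fun i : Fin 3 => x.coeff (Multiplicative.ofAdd (i : ZMod 3)) •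
        (auxHom w hw) (Multiplicative.ofAdd (i : ZMod 3)))).trans ?_
      have h0 : (auxHom w hw) (Multiplicative.ofAdd (0 : ZMod 3)) = 1 := pow_zero w
      have h1 : (auxHom w hw) (Multiplicative.ofAdd (1 : ZMod 3)) = w := pow_one w
      have h2 : (auxHom w hw) (Multiplicative.ofAdd (2 : ZMod 3)) = w ^ 2 := rfl
      exact congrArg₂ _ (congrArg₂ _ (congrArg _ h0) (congrArg _ h1)) (congrArg _ h2)
    rw [key] at hx2
    obtain ⟨h0, h1, h2⟩ := hinj _ _ _ hx2
    ext g
    have : g = Multiplicative.ofAdd 0 ∨ g = Multiplicative.ofAdd 1 ∨ g = Multiplicative.ofAdd 2 := by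
      revert g; decide
    rcases this with rfl | rfl | rfl
    · exact h0
    · exact h1
    · exact h2
  have hs := (LinearMap.injective_iff_surjective_of_finrank_eq_finrank
    ((aux_fin F).trans hA.symm)).1 hi
  exact ⟨AlgEquiv.ofBijective f ⟨hi, hs⟩⟩

theorem aux_card (F : Type*) [Field F] [Finite F] [CharP F 2] (t : ℕ)
    (ht : letI := ZMod.algebra F 2; Module.finrank (ZMod 2) F = t) : Nat.card F = 2 ^ t := by
  letI := ZMod.algebra F 2
  have := Module.natCard_eq_pow_finrank (K := ZMod 2) (V := F)
  rw [this, ← ht, Nat.card_zmod]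

theorem aux_even (F : Type*) [Field F] [Finite F] (t : ℕ)
    (h : Nat.card F = 2 ^ t) (he : Even t) : ∃ w : F, w ^ 2 + w + 1 = 0 := by
  have h3 : 3 ∣ Nat.card Fˣ := by
    rw [Nat.card_units, h]
    obtain ⟨k, rfl⟩ := he
    rw [← two_mul, pow_mul]
    simpa using Nat.sub_dvd_pow_sub_pow 4 1 k
  haveI : Fact (Nat.Prime 3) := ⟨by norm_num⟩
  obtain ⟨u, hu⟩ := exists_prime_orderOf_dvd_card' 3 h3
  refine ⟨u, ?_⟩
  have h1 : u ^ 3 = 1 := hu ▸ pow_orderOf_eq_one u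
  have h1' : (u : F) ^ 3 = 1 := by rw [← Units.val_pow_eq_pow_val, h1, Units.val_one]
  have h2 : (u : F) - 1 ≠ 0 := by
    intro hh
    have : u = 1 := Units.ext (sub_eq_zero.1 hh)
    rw [this, orderOf_one] at hu
    omega
  apply mul_left_cancel₀ h2
  linear_combination h1'

theorem aux_odd (F : Type*) [Field F] [Finite F] [CharP F 2] (t : ℕ)
    (h : Nat.card F = 2 ^ t) (he : Odd t) (w : F) : w ^ 2 + w + 1 ≠ 0 := by
  intro hw
  have h20 : (2 : F) = 0 := CharTwo.two_eq_zero
  have h3 : w ^ 3 = 1 := by linear_combination (w - 1) * hw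
  have hne : w ≠ 1 := by
    rintro rfl
    exact one_ne_zero (α := F) (by linear_combination hw - h20)
  haveI : Fact (Nat.Prime 3) := ⟨by norm_num⟩
  have ho := orderOf_eq_prime h3 hne
  haveI := Fintype.ofFinite F
  have hp : w ^ (Nat.card F) = w := by rw [Nat.card_eq_fintype_card]; exact FiniteField.pow_card w
  obtain ⟨k, rfl⟩ := he
  have hm : 2 ^ (2 * k + 1) % 3 = 2 := by
    rw [pow_succ, pow_mul, Nat.mul_mod, Nat.pow_mod]; norm_num
  rw [h, pow_eq_pow_mod _ h3, hm] at hp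
  have hw0 : w ≠ 0 := by rintro rfl; simp at h3
  apply hne
  apply mul_left_cancel₀ hw0
  linear_combination hp

open Polynomial in
theorem aux_field (F : Type*) [Field F] [Finite F] [CharP F 2]
    (h : ∀ w : F, w ^ 2 + w + 1 ≠ 0) : ∃ (K : Type*) (_ : Field K) (_ : Algebra F K),
      Module.finrank F K = 2 ∧ ∃ w : K, w ^ 2 + w + 1 = 0 := by
  let p : F[X] := X ^ 2 + X + 1
  have hd : p.natDegree = 2 := by simp only [p]; compute_degree!
  have hp0 : p ≠ 0 := by intro hh; rw [hh] at hd; simp at hd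
  have hirr : Irreducible p := by
    rw [irreducible_iff_roots_eq_zero_of_degree_le_three (by omega) (by omega)]
    apply Multiset.eq_zero_of_forall_notMem
    intro a ha
    rw [mem_roots hp0] at ha
    exact h a (by simpa [p] using ha)
  haveI : Fact (Irreducible p) := ⟨hirr⟩
  have hfr : Module.finrank F (AdjoinRoot p) = 2 := by
    rw [(AdjoinRoot.powerBasis hp0).finrank, AdjoinRoot.powerBasis_dim, hd]
  haveI : Module.Finite F (AdjoinRoot p) := Module.finite_of_finrank_pos (by omega)
  haveI : Finite (AdjoinRoot p) := Module.finite_of_finite F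
  obtain ⟨S, ⟨e⟩⟩ : ∃ S : Type _, Nonempty (S ≃ AdjoinRoot p) :=
    ⟨ULift (Fin (Nat.card (AdjoinRoot p))),
      ⟨Equiv.ulift.trans (Finite.equivFin (AdjoinRoot p)).symm⟩⟩
  letI := e.field
  letI := e.algebra F
  let g : S ≃ₐ[F] AdjoinRoot p := e.algEquiv F
  refine ⟨S, e.field, e.algebra F, ?_, g.symm (AdjoinRoot.root p), ?_⟩
  · rw [← hfr]
    exact g.toLinearEquiv.finrank_eq
  · apply g.injective
    have := AdjoinRoot.eval₂_root p
    simp only [p, eval₂_add, eval₂_pow, eval₂_X, eval₂_one] at this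
    rw [map_add, map_add, map_pow, map_one, map_zero, g.apply_symm_apply]
    exact this

/-- Let `F` be a finite field of characteristic `2` with `[F : 𝔽₂] = t`. If `t` is even,
then `F[C₃] ≅ F³` as `F`-algebras; if `t` is odd, then `F[C₃] ≅ F × K` as `F`-algebras,
where `K` is a field extension of `F` of degree `2`. -/
theorem monoidAlgebra_cyclic_three_char_two
    (F : Type*) [Field F] [Finite F] [CharP F 2] (t : ℕ)
    (ht : letI := ZMod.algebra F 2; Module.finrank (ZMod 2) F = t) :
    (Even t → Nonempty (MonoidAlgebra F (Multiplicative (ZMod 3)) ≃ₐ[F] (Fin 3 → F))) ∧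
    (Odd t → ∃ (K : Type*) (_ : Field K) (_ : Algebra F K),
      Module.finrank F K = 2 ∧
      Nonempty (MonoidAlgebra F (Multiplicative (ZMod 3)) ≃ₐ[F] (F × K))) := by
  have hc := aux_card F t ht
  have h20 : (2 : F) = 0 := CharTwo.two_eq_zero
  refine ⟨fun he => ?_, fun ho => ?_⟩
  · obtain ⟨w, hw⟩ := aux_even F t hc he
    have h3 : w ^ 3 = 1 := by linear_combination (w - 1) * hw
    refine aux_equiv F (by simp) (![1, w, w ^ 2] : Fin 3 → F) ?_ ?_
    · ext i
      fin_cases i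
      · simp
      · simpa using h3
      · simp only [Pi.pow_apply, Pi.one_apply]
        change (w ^ 2) ^ 3 = 1
        linear_combination (w ^ 3 + 1) * h3
    · intro a b c habc
      have e0 : a * 1 + b * 1 + c * 1 ^ 2 = 0 := congrFun habc 0
      have e1 : a * 1 + b * w + c * w ^ 2 = 0 := congrFun habc 1
      have e2 : a * 1 + b * w ^ 2 + c * (w ^ 2) ^ 2 = 0 := congrFun habc 2
      refine ⟨?_, ?_, ?_⟩
      · linear_combination e0 + e1 + e2 - a * h20 - (b + c) * hw - c * w * (w - 1) * hw
      · linear_combination e0 + w ^ 2 * e1 + w * e2 - a * hw - b * h20 - 2 * b * h3 - c * hw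
          - c * (w * (w - 1)) * hw - c * w ^ 2 * h3
      · linear_combination e0 + w * e1 + w ^ 2 * e2 - a * hw - b * hw
          - b * w * (w - 1) * hw - c * h20 - c * h3 - c * (w ^ 3 + 1) * h3
  · obtain ⟨K, iK, iA, hK, w, hw⟩ := aux_field F (aux_odd F t hc ho)
    refine ⟨K, iK, iA, hK, ?_⟩
    haveI : Module.Finite F K := Module.finite_of_finrank_pos (by omega)
    have h3 : w ^ 3 = 1 := by linear_combination (w - 1) * hw
    refine aux_equiv F (by rw [Module.finrank_prod, hK, Module.finrank_self])
      ((1, w) : F × K) (by ext <;> simp [h3]) ?_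
    intro a b c habc
    have e0 : a * 1 + b * 1 + c * 1 ^ 2 = 0 := congrArg Prod.fst habc
    have e1 : a • (1 : K) + b • w + c • w ^ 2 = 0 := congrArg Prod.snd habc
    simp only [Algebra.smul_def] at e1
    have e1' : algebraMap F K (a - c) + algebraMap F K (b - c) * w = 0 := by
      rw [map_sub, map_sub]
      linear_combination e1 - algebraMap F K c * hw
    have hbc : b - c = 0 := by
      by_contra hne
      have hw' : w = algebraMap F K (-(a - c) / (b - c)) := by
        have : algebraMap F K (b - c) ≠ 0 := (map_ne_zero _).2 hne
        rw [map_div₀, eq_div_iff this, map_neg]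
        linear_combination e1'
      apply aux_odd F t hc ho (-(a - c) / (b - c))
      apply (algebraMap F K).injective
      rw [map_add, map_add, map_pow, ← hw', map_one, map_zero, hw]
    have hac : a - c = 0 := by
      rw [hbc, map_zero, zero_mul, add_zero] at e1'
      exact (map_eq_zero _).1 e1'
    have hc0 : c = 0 := by linear_combination e0 - hac - hbc - c * h20
    refine ⟨?_, ?_, hc0⟩
    · linear_combination hac + hc0
    · linear_combination hbc + hc0
end
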